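/- arXiv:1807.09498 — 3 statements merged into one kernel-verified Lean document; each statement's English description precedes it below -/
import Mathlib

section
/- Let C be a convex body in ℝ² and p₁, p₂ ∈ ℝ² with I = C_{p₁} ∩ C_{p₂} ≠ ∅. Then C_{p₁} and C_{p₂} intersect plainly. Moreover, if p₁ ≠ p₂ and the interior of I is nonempty, then there exists a splitting configuration (u, v, l, σ₁, σ₂) for (C, p₁, p₂). -/
/-!
Choose linear coordinates in which `d = p₂ - p₁` is the upward unit vector, and write `K = C_{p₁}`,
so that `C_{p₂} = d + K` (`Frame`). If a boundary point `p` of `K` lies in `d + K`, then the point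
`p - d` of `K` lies below it. Hence, by looking at a supporting functional, `p` is either the
highest point of `K` on its vertical line or on one of the two vertical support lines of `K`
(`Frame.top_or_extreme`). The highest points form a compact arc that projects injectively to an
interval, so the arc is connected (`Frame.isPreconnected_topArc`); the points on the vertical
support lines form segments attached to its ends. So `∂K ∩ (d + K)` is connected, and exchanging the
translates (replacing `d` by `-d`) gives the other half of plain intersection. For `d = 0` the claim
is that the boundary of a convex body is connected, as it is homeomorphic to a circle.

For the splitting configuration, take for `u` and `v` the highest points of `I` of smallest and
largest abscissa. The vertical lines through `u` and `v` support `I`, so `[u, v]` is a longest chord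
of `I` in its direction, and convexity makes the chord lengths decrease away from it
(`vanishing_of_minmax`). The arcs are `σ₁`, the upper arc from `u` to `v`, and
`σ₂ = ∂C_{p₂} ∩ C_{p₁}`, which is connected by the first part. Vertical chords of `K` strictly
between `u` and `v` are longer than `d` because `I` has interior points (`Frame.exists_below`), so
the two arcs meet only in `u` and `v`.
-/

open EuclideanGeometry

noncomputable section

/-- The Euclidean plane `ℝ²`. -/
abbrev Pt := EuclideanSpace ℝ (Fin 2)

/-- The translate `Γ_p = p + Γ` of a set `Γ ⊆ ℝ²`. -/
def tr (p : Pt) (Γ : Set Pt) : Set Pt := (p + ·) '' Γ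
/-- A convex body in `ℝ²`: a compact convex set with nonempty interior. -/
def IsConvexBody (C : Set Pt) : Prop :=
  IsCompact C ∧ Convex ℝ C ∧ (interior C).Nonempty

/-- Two sets intersect plainly: `∂C ∩ D` and `∂D ∩ C` are both connected. -/
def PlainlyIntersect (C D : Set Pt) : Prop :=
  IsPreconnected (frontier C ∩ D) ∧ IsPreconnected (frontier D ∩ C)

/-- A line in `ℝ²`. -/
def IsLine (l : Set Pt) : Prop :=
  ∃ a d : Pt, d ≠ 0 ∧ l = {x | ∃ t : ℝ, x = a + t • d}

/-- `H` is a closed side of the line `l`. -/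
def IsSideOf (l H : Set Pt) : Prop :=
  ∃ (f : Pt →ₗ[ℝ] ℝ) (c : ℝ), f ≠ 0 ∧ l = {x | f x = c} ∧ H = {x | f x ≤ c}

/-- `H` is a `C`-vanishing side of the line `l`: the length `len_C` of the sections of `C` by the
lines parallel to `l` within `H` is non-increasing (as a function of the distance from `l`) on the
set of lines meeting `C`.  Here `len_C` of a line is the diameter of the corresponding section. -/
def VanishingSide (C l H : Set Pt) : Prop :=
  ∃ (f : Pt →ₗ[ℝ] ℝ) (c : ℝ), f ≠ 0 ∧ l = {x | f x = c} ∧ H = {x | f x ≤ c} ∧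
    ∀ s t : ℝ, 0 ≤ s → s ≤ t →
      (C ∩ {x | f x = c - s}).Nonempty → (C ∩ {x | f x = c - t}).Nonempty →
      Metric.diam (C ∩ {x | f x = c - t}) ≤ Metric.diam (C ∩ {x | f x = c - s})

/-- A splitting configuration `(u, v, l, σ₁, σ₂)` for `(C, p₁, p₂)`, where
`I = C_{p₁} ∩ C_{p₂}`:  `u ≠ v` are points of `∂I`, `l` is the line through `u` and `v`, both
closed sides of `l` are `I`-vanishing, `l` is not parallel to the line through `p₁, p₂`,
`I ∩ l = [u, v]`, and `∂I` is the union of two connected arcs `σ₁ ⊆ ∂C_{p₁}`, `σ₂ ⊆ ∂C_{p₂}`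
meeting exactly in `{u, v}`. -/
def SplittingConfig (C : Set Pt) (p₁ p₂ u v : Pt) (l σ₁ σ₂ : Set Pt) : Prop :=
  u ≠ v ∧
  u ∈ frontier (tr p₁ C ∩ tr p₂ C) ∧ v ∈ frontier (tr p₁ C ∩ tr p₂ C) ∧
  l = {x | ∃ t : ℝ, x = u + t • (v - u)} ∧
  (∀ H : Set Pt, IsSideOf l H → VanishingSide (tr p₁ C ∩ tr p₂ C) l H) ∧
  (¬ ∃ t : ℝ, p₂ - p₁ = t • (v - u)) ∧
  (tr p₁ C ∩ tr p₂ C) ∩ l = segment ℝ u v ∧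
  IsConnected σ₁ ∧ IsConnected σ₂ ∧
  frontier (tr p₁ C ∩ tr p₂ C) = σ₁ ∪ σ₂ ∧ σ₁ ∩ σ₂ = {u, v} ∧
  σ₁ ⊆ frontier (tr p₁ C) ∧ σ₂ ⊆ frontier (tr p₂ C)

/-! ### Coordinates and supporting functionals -/

/-- Linear coordinates on the plane adapted to a translation vector `d`: `f` is the abscissa,
with `f e = 1` and `f d = 0`, and `k` is the height, with `k e = 0` and `k d = 1`. -/
structure Frame (d e : Pt) (f k : Pt →L[ℝ] ℝ) : Prop where
  fd : f d = 0
  fe : f e = 1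
  kd : k d = 1
  eq : ∀ p, p = f p • e + k p • d

lemma exists_frame (d : Pt) (hd : d ≠ 0) : ∃ e f k, Frame d e f k := by
  have hn : d 0 ^ 2 + d 1 ^ 2 ≠ 0 := by
    intro h
    apply hd
    have h0 : d 0 = 0 := by nlinarith [sq_nonneg (d 0), sq_nonneg (d 1)]
    have h1 : d 1 = 0 := by nlinarith [sq_nonneg (d 0), sq_nonneg (d 1)]
    ext i; fin_cases i <;> simp [h0, h1]
  let x : Pt →L[ℝ] ℝ := EuclideanSpace.proj 0
  let y : Pt →L[ℝ] ℝ := EuclideanSpace.proj 1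
  refine ⟨!₂[-d 1, d 0], (d 0 ^ 2 + d 1 ^ 2)⁻¹ • (d 0 • y - d 1 • x),
    (d 0 ^ 2 + d 1 ^ 2)⁻¹ • (d 0 • x + d 1 • y), ⟨?_, ?_, ?_, ?_⟩⟩
  · simp [x, y]; right; ring
  · simp [x, y]; field_simp
  · simp [x, y]; field_simp
  · intro p
    ext i; fin_cases i <;> simp [x, y] <;> field_simp <;> ring

/-- Two points with the same abscissa differ by a multiple of `d`. -/
lemma Frame.fibre {d e : Pt} {f k : Pt →L[ℝ] ℝ} (F : Frame d e f k) {p q : Pt} (h : f p = f q) :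
    q = p + (k q - k p) • d := by
  have hp := F.eq p
  have hq := F.eq q
  rw [h] at hp
  rw [sub_smul]
  nth_rewrite 1 [hq]
  nth_rewrite 1 [hp]
  abel

lemma conv_mem {K : Set Pt} (hK : Convex ℝ K) {p q : Pt} (hp : p ∈ K) (hq : q ∈ K) {t : ℝ}
    (h0 : 0 ≤ t) (h1 : t ≤ 1) : (1 - t) • p + t • q ∈ K :=
  hK hp hq (by linarith) h0 (by ring)

/-- Supporting functional of a convex set at a point outside its interior. -/
lemma exists_support {K : Set Pt} (hK : Convex ℝ K) (hi : (interior K).Nonempty) {p : Pt}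
    (hp : p ∉ interior K) : ∃ g : Pt →L[ℝ] ℝ, g ≠ 0 ∧ ∀ q ∈ K, g q ≤ g p := by
  obtain ⟨g, hg⟩ := geometric_hahn_banach_open_point hK.interior isOpen_interior hp
  refine ⟨g, ?_, ?_⟩
  · rintro rfl
    obtain ⟨z, hz⟩ := hi
    simpa using hg z hz
  · intro q hq
    have h1 : q ∈ closure (interior K) := by
      rw [hK.closure_interior_eq_closure_of_nonempty_interior hi]
      exact subset_closure hq
    have h2 : closure (interior K) ⊆ {x | g x ≤ g p} :=
      closure_minimal (fun x hx => (hg x hx).le)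
        (isClosed_le g.continuous continuous_const)
    exact h2 h1

/-- A point lying strictly between two points of `K` on its vertical line and strictly between two
points of `K` in abscissa is interior: a supporting functional there would have to vanish. -/
lemma Frame.mem_interior {d e : Pt} {f k : Pt →L[ℝ] ℝ} (F : Frame d e f k) {K : Set Pt}
    (hK : Convex ℝ K) (hi : (interior K).Nonempty) {p a b : Pt} {s₁ s₂ : ℝ} (h1 : 0 < s₁)
    (h2 : 0 < s₂) (hp1 : p - s₁ • d ∈ K) (hp2 : p + s₂ • d ∈ K) (ha : a ∈ K) (hb : b ∈ K)
    (hfa : f a < f p) (hfb : f p < f b) : p ∈ interior K := by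
  by_contra hp
  obtain ⟨g, hg0, hg⟩ := exists_support hK hi hp
  have e1 := hg _ hp1
  have e2 := hg _ hp2
  simp only [map_sub, map_add, map_smul, smul_eq_mul] at e1 e2
  have gd : g d = 0 := by
    apply le_antisymm
    · by_contra h; push Not at h; nlinarith [mul_pos h2 h]
    · by_contra h; push Not at h; nlinarith [mul_neg_of_pos_of_neg h1 h]
  have gq : ∀ q, g q = f q * g e := by
    intro q
    conv_lhs => rw [F.eq q]
    simp [gd]
  have e3 := hg _ ha
  have e4 := hg _ hb
  rw [gq a, gq p] at e3
  rw [gq b, gq p] at e4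
  have ge : g e = 0 := by
    apply le_antisymm
    · by_contra h; push Not at h; nlinarith
    · by_contra h; push Not at h; nlinarith
  apply hg0
  ext q
  simp [gq q, ge]

/-- From an interior point one can move a little in any direction without leaving the set. -/
lemma step_of_interior {S : Set Pt} {p : Pt} (hp : p ∈ interior S) (v : Pt) :
    ∃ t : ℝ, 0 < t ∧ t < 1 ∧ p + t • v ∈ S := by
  have hc : Filter.Tendsto (fun t : ℝ => p + t • v) (nhdsWithin 0 (Set.Ioi 0)) (nhds p) := by
    have : Continuous (fun t : ℝ => p + t • v) := by fun_prop
    have h := this.tendsto 0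
    simp only [zero_smul, add_zero] at h
    exact h.mono_left nhdsWithin_le_nhds
  have h1 := hc.eventually (mem_interior_iff_mem_nhds.1 hp)
  have h2 : ∀ᶠ t : ℝ in nhdsWithin 0 (Set.Ioi 0), t ∈ Set.Ioo (0 : ℝ) 1 :=
    Ioo_mem_nhdsGT one_pos
  obtain ⟨t, ht, ht2⟩ := (h1.and h2).exists
  exact ⟨t, ht2.1, ht2.2, ht⟩

/-- A point at which a nonzero functional is minimal on `S` is not interior to `S`. -/
lemma not_mem_interior_of_min {S : Set Pt} {p : Pt} (g : Pt →L[ℝ] ℝ) (v : Pt) (hv : g v < 0)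
    (h : ∀ q ∈ S, g p ≤ g q) : p ∉ interior S := by
  intro hp
  obtain ⟨t, ht, -, hm⟩ := step_of_interior hp v
  have := h _ hm
  simp only [map_add, map_smul, smul_eq_mul] at this
  nlinarith [mul_neg_of_pos_of_neg ht hv]

/-! ### The upper arc -/

/-- The upper arc of `K ∩ (d + K)`: its points that are highest in `K` on their vertical line. -/
def topArc (K : Set Pt) (d : Pt) : Set Pt :=
  {p | p ∈ K ∧ p - d ∈ K ∧ ∀ s : ℝ, 0 < s → p + s • d ∉ K}

/-- If `p` is not highest in `K`, then neither are the nearby points of `K` on the side of `b`: the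
segment from a point above `p` to `b` passes above them. When `f b = f p` the parameter of that
segment is a division by zero, hence `0`, which is the value needed. -/
lemma Frame.not_top_near {d e : Pt} {f k : Pt →L[ℝ] ℝ} (F : Frame d e f k) {K : Set Pt}
    (hK : Convex ℝ K) {p b : Pt} {s : ℝ} (hs : 0 < s) (hp : p + s • d ∈ K) (hb : b ∈ K) :
    ∃ O : Set Pt, IsOpen O ∧ p ∈ O ∧ ∀ q ∈ O,
      (f p ≤ f q ∧ f q ≤ f b ∨ f b ≤ f q ∧ f q ≤ f p) → ∃ r : ℝ, 0 < r ∧ q + r • d ∈ K := by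
  refine ⟨{q | k q < (1 - (f q - f p) / (f b - f p)) * (k p + s)
    + (f q - f p) / (f b - f p) * k b}, ?_, ?_, ?_⟩
  · exact isOpen_lt k.continuous (by fun_prop)
  · simp [hs]
  · intro q hq hcase
    simp only [Set.mem_ofPred_eq] at hq
    set t := (f q - f p) / (f b - f p) with ht
    have key : 0 ≤ t ∧ t ≤ 1 ∧ f q - f p = t * (f b - f p) := by
      rcases eq_or_ne (f b) (f p) with h | h
      · have h0 : t = 0 := by rw [ht, h]; simp
        rw [h0]
        refine ⟨le_rfl, zero_le_one, ?_⟩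
        rcases hcase with h' | h' <;> linarith [h'.1, h'.2]
      · have h' : f b - f p ≠ 0 := sub_ne_zero.2 h
        refine ⟨?_, ?_, by rw [ht, div_mul_cancel₀ _ h']⟩
        · rcases hcase with h2 | h2
          · exact div_nonneg (by linarith) (by linarith)
          · exact div_nonneg_of_nonpos (by linarith) (by linarith)
        · rcases hcase with h2 | h2
          · exact div_le_one_of_le₀ (by linarith) (by linarith)
          · exact div_le_one_of_ge (by linarith) (by linarith)
    obtain ⟨t0, t1, htf⟩ := key
    have hm := conv_mem hK hp hb t0 t1
    set m := (1 - t) • (p + s • d) + t • b with hmdef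
    have hfm : f q = f m := by
      simp only [hmdef, map_add, map_smul, smul_eq_mul, F.fd]
      linarith
    have hkm : k m = (1 - t) * (k p + s) + t * k b := by
      simp only [hmdef, map_add, map_smul, smul_eq_mul, F.kd, mul_one]
    refine ⟨k m - k q, by linarith, ?_⟩
    rw [← F.fibre hfm]
    exact hm

lemma Frame.isClosed_topArc {d e : Pt} {f k : Pt →L[ℝ] ℝ} (F : Frame d e f k) {K : Set Pt}
    (hK : Convex ℝ K) (hc : IsCompact K) : IsClosed (topArc K d) := by
  apply isClosed_of_closure_subset
  intro p hp
  have hcl : IsClosed {p | p ∈ K ∧ p - d ∈ K} :=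
    hc.isClosed.inter (hc.isClosed.preimage (by fun_prop : Continuous fun p : Pt => p - d))
  have hpJ : p ∈ {p | p ∈ K ∧ p - d ∈ K} :=
    closure_minimal (fun q (hq : q ∈ topArc K d) => And.intro hq.1 hq.2.1) hcl hp
  refine ⟨hpJ.1, hpJ.2, fun s hs hps => ?_⟩
  obtain ⟨a, ha, ha'⟩ := hc.exists_isMinOn ⟨p, hpJ.1⟩ f.continuous.continuousOn
  obtain ⟨b, hb, hb'⟩ := hc.exists_isMaxOn ⟨p, hpJ.1⟩ f.continuous.continuousOn
  obtain ⟨O, hO, hpO, hO'⟩ := F.not_top_near hK hs hps ha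
  obtain ⟨U, hU, hpU, hU'⟩ := F.not_top_near hK hs hps hb
  obtain ⟨q, ⟨hqO, hqU⟩, hq⟩ := mem_closure_iff.1 hp _ (hO.inter hU) ⟨hpO, hpU⟩
  have h1 : f a ≤ f q := ha' hq.1
  have h2 : f q ≤ f b := hb' hq.1
  rcases le_total (f p) (f q) with h | h
  · obtain ⟨r, hr, hm⟩ := hU' q hqU (Or.inl ⟨h, h2⟩)
    exact hq.2.2 r hr hm
  · obtain ⟨r, hr, hm⟩ := hO' q hqO (Or.inr ⟨h1, h⟩)
    exact hq.2.2 r hr hm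

/-- Above every point of `K ∩ (d + K)` lies a point of the upper arc. -/
lemma Frame.exists_top {d e : Pt} {f k : Pt →L[ℝ] ℝ} (F : Frame d e f k) {K : Set Pt}
    (hK : Convex ℝ K) (hc : IsCompact K) {p : Pt} (hp : p ∈ K) (hpd : p - d ∈ K) :
    ∃ q ∈ topArc K d, f q = f p := by
  have hc' : IsCompact (K ∩ {q | f q = f p}) :=
    hc.inter_right (isClosed_eq f.continuous continuous_const)
  obtain ⟨q, ⟨hq, hfq⟩, hmax⟩ := hc'.exists_isMaxOn ⟨p, hp, rfl⟩ k.continuous.continuousOn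
  simp only [Set.mem_ofPred_eq] at hfq
  refine ⟨q, ⟨hq, ?_, ?_⟩, hfq⟩
  · have hle : k p ≤ k q := hmax ⟨hp, rfl⟩
    have hqe := F.fibre hfq.symm
    set s := k q - k p
    have hs : 0 ≤ s := by simp only [s]; linarith
    have hm := conv_mem hK hpd hq (t := s / (1 + s)) (by positivity)
      (div_le_one_of_le₀ (by linarith) (by linarith))
    convert hm using 1
    rw [hqe]
    match_scalars <;> field_simp <;> ring
  · intro s hs hm
    have : k (q + s • d) ≤ k q := hmax ⟨hm, by simp [F.fd, hfq]⟩
    simp only [map_add, map_smul, smul_eq_mul, F.kd] at this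
    linarith

lemma Frame.topArc_inj {d e : Pt} {f k : Pt →L[ℝ] ℝ} (F : Frame d e f k) {K : Set Pt} {p q : Pt}
    (hp : p ∈ topArc K d) (hq : q ∈ topArc K d) (h : f p = f q) : p = q := by
  have h1 := F.fibre h
  have h2 := F.fibre h.symm
  rcases lt_trichotomy (k p) (k q) with h' | h' | h'
  · exact absurd (h1 ▸ hq.1) (hp.2.2 _ (by linarith))
  · rw [h'] at h1; simpa using h1.symm
  · exact absurd (h2 ▸ hp.1) (hq.2.2 _ (by linarith))

lemma convex_translate {K : Set Pt} (hK : Convex ℝ K) (d : Pt) : Convex ℝ {p | p - d ∈ K} := by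
  intro p hp q hq a b ha hb hab
  have := hK hp hq ha hb hab
  simp only [Set.mem_ofPred_eq]
  convert this using 1
  have h1 : d = (a + b) • d := by rw [hab, one_smul]
  nth_rewrite 1 [h1]
  module

/-- The upper arc is compact and `f` is injective on it, so it is homeomorphic to its projection,
which is an interval. -/
lemma Frame.isPreconnected_topArc {d e : Pt} {f k : Pt →L[ℝ] ℝ} (F : Frame d e f k) {K : Set Pt}
    (hK : Convex ℝ K) (hc : IsCompact K) : IsPreconnected (topArc K d) := by
  have hTc : IsCompact (topArc K d) :=
    hc.of_isClosed_subset (F.isClosed_topArc hK hc) fun p hp => hp.1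
  have : CompactSpace (topArc K d) := isCompact_iff_compactSpace.1 hTc
  let φ : topArc K d → ℝ := fun p => f p
  have hφ : Continuous φ := by fun_prop
  have hinj : Function.Injective φ := fun p q h => Subtype.ext (F.topArc_inj p.2 q.2 h)
  have hr : Set.range φ = f '' (K ∩ {p | p - d ∈ K}) := by
    ext x
    constructor
    · rintro ⟨p, rfl⟩
      exact ⟨p, ⟨p.2.1, p.2.2.1⟩, rfl⟩
    · rintro ⟨p, hp, rfl⟩
      obtain ⟨q, hq, hqp⟩ := F.exists_top hK hc hp.1 hp.2
      exact ⟨⟨q, hq⟩, hqp⟩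
  have hJ : Convex ℝ (K ∩ {p | p - d ∈ K}) := hK.inter (convex_translate hK d)
  have hpre : IsPreconnected (Set.range φ) := by
    rw [hr]
    exact hJ.isPreconnected.image _ f.continuous.continuousOn
  have := hpre.preimage_of_isClosedMap hinj hφ.isClosedMap subset_rfl
  rw [Set.preimage_range] at this
  have h2 := this.image Subtype.val continuous_subtype_val.continuousOn
  rwa [Set.image_univ, Subtype.range_coe] at h2

/-! ### Boundary of a convex body inside a translate -/

lemma mem_interior_translate {K : Set Pt} {p d : Pt} :
    p ∈ interior {q | q - d ∈ K} ↔ p - d ∈ interior K := by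
  have h := (Homeomorph.subRight d).preimage_interior K
  exact (Set.ext_iff.1 h p).symm

/-- A boundary point of `K` lying in `d + K` is on the upper arc, or is extreme in abscissa. -/
lemma Frame.top_or_extreme {d e : Pt} {f k : Pt →L[ℝ] ℝ} (F : Frame d e f k) {K : Set Pt}
    (hK : Convex ℝ K) (hi : (interior K).Nonempty) {p : Pt} (hp : p ∈ K) (hpi : p ∉ interior K)
    (hpd : p - d ∈ K) :
    p ∈ topArc K d ∨ (∀ q ∈ K, f p ≤ f q) ∨ (∀ q ∈ K, f q ≤ f p) := by
  by_contra! hcon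
  obtain ⟨h1, ⟨a, ha, ha'⟩, ⟨b, hb, hb'⟩⟩ := hcon
  have : ∃ s : ℝ, 0 < s ∧ p + s • d ∈ K := by
    by_contra! h
    exact h1 ⟨hp, hpd, h⟩
  obtain ⟨s, hs, hm⟩ := this
  exact hpi (F.mem_interior hK hi one_pos hs (by simpa using hpd) hm ha hb ha' hb')

lemma topArc_not_interior {K : Set Pt} {d p : Pt} (hp : p ∈ topArc K d) : p ∉ interior K := by
  intro h
  obtain ⟨t, ht, -, hm⟩ := step_of_interior h d
  exact hp.2.2 t ht hm

lemma Frame.not_interior_of_extreme {d e : Pt} {f k : Pt →L[ℝ] ℝ} (F : Frame d e f k) {K : Set Pt}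
    {p : Pt} (h : (∀ q ∈ K, f p ≤ f q) ∨ (∀ q ∈ K, f q ≤ f p)) : p ∉ interior K := by
  rcases h with h | h
  · exact not_mem_interior_of_min f (-e) (by simp [F.fe]) h
  · exact not_mem_interior_of_min (-f) e (by simp [F.fe]) (by simpa using h)

/-- The part of `∂K` in `d + K` is the upper arc together with two (possibly empty) vertical
segments attached to its ends. -/
lemma Frame.isPreconnected_frontier {d e : Pt} {f k : Pt →L[ℝ] ℝ} (F : Frame d e f k)
    {K : Set Pt} (hK : Convex ℝ K) (hc : IsCompact K) (hi : (interior K).Nonempty) :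
    IsPreconnected (frontier K ∩ {p | p - d ∈ K}) := by
  have hT := F.isPreconnected_topArc hK hc
  have hJ : Convex ℝ (K ∩ {p | p - d ∈ K}) := hK.inter (convex_translate hK d)
  have hfr : ∀ p, p ∈ frontier K ↔ p ∈ K ∧ p ∉ interior K := by
    intro p; rw [hc.isClosed.frontier_eq]; rfl
  -- every point is joined to the upper arc inside the set
  have join : ∀ p ∈ frontier K ∩ {p | p - d ∈ K}, ∃ S : Set Pt,
      S ⊆ frontier K ∩ {p | p - d ∈ K} ∧ topArc K d ⊆ S ∧ p ∈ S ∧ IsPreconnected S := by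
    rintro p ⟨hp, hpd⟩
    obtain ⟨hpK, hpi⟩ := (hfr p).1 hp
    have hTsub : topArc K d ⊆ frontier K ∩ {p | p - d ∈ K} := fun q hq =>
      ⟨(hfr q).2 ⟨hq.1, topArc_not_interior hq⟩, hq.2.1⟩
    rcases F.top_or_extreme hK hi hpK hpi hpd with h | h
    · exact ⟨topArc K d, hTsub, subset_rfl, h, hT⟩
    · obtain ⟨q, hq, hqp⟩ := F.exists_top hK hc hpK hpd
      have hL : Convex ℝ (K ∩ {p | p - d ∈ K} ∩ {x | f x = f p}) :=
        hJ.inter (convex_hyperplane f.toLinearMap.isLinear _)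
      refine ⟨topArc K d ∪ (K ∩ {p | p - d ∈ K} ∩ {x | f x = f p}),
        Set.union_subset hTsub ?_, Set.subset_union_left, Or.inr ⟨⟨hpK, hpd⟩, rfl⟩,
        hT.union q hq ⟨⟨hq.1, hq.2.1⟩, hqp⟩ hL.isPreconnected⟩
      rintro x ⟨⟨hx, hxd⟩, hxp⟩
      refine ⟨(hfr x).2 ⟨hx, F.not_interior_of_extreme ?_⟩, hxd⟩
      rw [show f x = f p from hxp]
      exact h
  apply isPreconnected_of_forall_pair
  intro x hx y hy
  obtain ⟨S, hS, hTS, hxS, hSc⟩ := join x hx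
  obtain ⟨S', hS', hTS', hyS', hSc'⟩ := join y hy
  obtain ⟨q, hq, -⟩ := F.exists_top hK hc ((hfr x).1 hx.1).1 hx.2
  exact ⟨S ∪ S', Set.union_subset hS hS', Or.inl hxS, Or.inr hyS',
    hSc.union q (hTS hq) (hTS' hq) hSc'⟩

lemma isPreconnected_frontier_body {K : Set Pt} (hK : Convex ℝ K) (hc : IsCompact K)
    (hi : (interior K).Nonempty) : IsPreconnected (frontier K) := by
  obtain ⟨h, -, -, h3⟩ :=
    exists_homeomorph_image_interior_closure_frontier_eq_unitBall hK hi hc.isBounded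
  have hs : IsPreconnected (Metric.sphere (0 : Pt) 1) := by
    apply isPreconnected_sphere
    rw [← Module.finrank_eq_rank, finrank_euclideanSpace_fin]
    norm_num
  rw [← h3] at hs
  have := hs.image h.symm h.symm.continuous.continuousOn
  simpa [Set.image_image] using this

lemma isPreconnected_frontier_inter {K : Set Pt} (hK : Convex ℝ K) (hc : IsCompact K)
    (hi : (interior K).Nonempty) (d : Pt) : IsPreconnected (frontier K ∩ {p | p - d ∈ K}) := by
  rcases eq_or_ne d 0 with rfl | hd
  · have : frontier K ∩ {p | p - 0 ∈ K} = frontier K := by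
      apply Set.inter_eq_left.2
      intro p hp
      simpa using hc.isClosed.frontier_subset hp
    rw [this]
    exact isPreconnected_frontier_body hK hc hi
  · obtain ⟨e, f, k, F⟩ := exists_frame d hd
    exact F.isPreconnected_frontier hK hc hi

/-! ### Vanishing sides -/

/-- If `u` and `v` are points of `I` minimizing and maximizing a functional `f`, then every chord
of `I` parallel to `[u, v]` is at most as long as `[u, v]`, and both sides of the line through them
are vanishing: a chord at distance `t` can be contracted towards `[u, v]`, which yields chords at
all smaller distances `s` that are at least as long. -/
lemma vanishing_of_minmax {I : Set Pt} (hI : Convex ℝ I) (hb : Bornology.IsBounded I) {u v : Pt}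
    (f : Pt →L[ℝ] ℝ) (hu : u ∈ I) (hv : v ∈ I) (huv : f u < f v) (hmin : ∀ q ∈ I, f u ≤ f q)
    (hmax : ∀ q ∈ I, f q ≤ f v) {H : Set Pt}
    (hH : IsSideOf {x | ∃ t : ℝ, x = u + t • (v - u)} H) :
    VanishingSide I {x | ∃ t : ℝ, x = u + t • (v - u)} H := by
  obtain ⟨g, c, hg, hl, hHe⟩ := hH
  refine ⟨g, c, hg, hl, hHe, ?_⟩
  intro s t hs hst _ _
  have hgu : g u = c := (Set.ext_iff.1 hl u).1 ⟨0, by simp⟩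
  have hgv : g v = c := (Set.ext_iff.1 hl v).1 ⟨1, by simp⟩
  rcases eq_or_lt_of_le (hs.trans hst) with ht | ht
  · have : s = t := by linarith
    rw [this]
  set m := s / t with hm
  have hm0 : 0 ≤ m := by positivity
  have hm1 : m ≤ 1 := div_le_one_of_le₀ hst ht.le
  have hmt : m * t = s := div_mul_cancel₀ _ ht.ne'
  have hbs : Bornology.IsBounded (I ∩ {x | g x = c - s}) := hb.subset Set.inter_subset_left
  -- the estimate for a chord `[p, q]` directed like `[u, v]`
  have main : ∀ p ∈ I ∩ {x | g x = c - t}, ∀ q ∈ I ∩ {x | g x = c - t}, ∀ r : ℝ, 0 ≤ r →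
      q - p = r • (v - u) → dist p q ≤ Metric.diam (I ∩ {x | g x = c - s}) := by
    rintro p ⟨hp, hgp⟩ q ⟨hq, hgq⟩ r hr hqp
    simp only [Set.mem_ofPred_eq] at hgp hgq
    have hr1 : r ≤ 1 := by
      have h1 := congrArg f hqp
      simp only [map_sub, map_smul, smul_eq_mul] at h1
      have h2 := hmin p hp
      have h3 := hmax q hq
      by_contra! h
      nlinarith [mul_pos (sub_pos.2 h) (sub_pos.2 huv)]
    have hp' : (1 - m) • u + m • p ∈ I ∩ {x | g x = c - s} := by
      refine ⟨conv_mem hI hu hp hm0 hm1, ?_⟩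
      simp only [Set.mem_ofPred_eq, map_add, map_smul, smul_eq_mul, hgu, hgp]
      linarith
    have hq' : (1 - m) • v + m • q ∈ I ∩ {x | g x = c - s} := by
      refine ⟨conv_mem hI hv hq hm0 hm1, ?_⟩
      simp only [Set.mem_ofPred_eq, map_add, map_smul, smul_eq_mul, hgv, hgq]
      linarith
    refine le_trans ?_ (Metric.dist_le_diam_of_mem hbs hp' hq')
    have e1 : ((1 - m) • v + m • q) - ((1 - m) • u + m • p) = ((1 - m) + m * r) • (v - u) := by
      have : ((1 - m) • v + m • q) - ((1 - m) • u + m • p)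
          = (1 - m) • (v - u) + m • (q - p) := by module
      rw [this, hqp]
      module
    rw [dist_comm p q, dist_comm (_ + _), dist_eq_norm, dist_eq_norm, e1, hqp, norm_smul,
      norm_smul, Real.norm_of_nonneg hr,
      Real.norm_of_nonneg (add_nonneg (by linarith) (mul_nonneg hm0 hr))]
    exact mul_le_mul_of_nonneg_right (by nlinarith) (norm_nonneg _)
  apply Metric.diam_le_of_forall_dist_le Metric.diam_nonneg
  intro p hp q hq
  have hgp : g p = c - t := hp.2
  have hgq : g q = c - t := hq.2
  have : u + (q - p) ∈ {x | g x = c} := by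
    simp [hgu, hgp, hgq]
  rw [← hl] at this
  obtain ⟨r, hr⟩ := this
  have hr' : q - p = r • (v - u) := add_left_cancel hr
  rcases le_total 0 r with h | h
  · exact main p hp q hq r h hr'
  · rw [dist_comm]
    refine main q hq p hp (-r) (by linarith) ?_
    rw [neg_smul, ← hr', neg_sub]

/-! ### The ends and the relative interior of the upper arc -/

/-- A point of `K ∩ (d + K)` where a functional killing `d` is minimal on the intersection is not
interior to `d + K`: otherwise `K` has points further out, and moving towards one of them stays in
both sets. -/
lemma not_interior_translate_of_min {K : Set Pt} (hK : Convex ℝ K) {d w : Pt} (g : Pt →L[ℝ] ℝ)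
    (gd : g d = 0) (hw : g w < 0) {u : Pt} (hu : u ∈ K)
    (hmin : ∀ q ∈ K ∩ {p | p - d ∈ K}, g u ≤ g q) : u - d ∉ interior K := by
  intro hi
  obtain ⟨t, ht, -, hr⟩ := step_of_interior hi w
  set r := u - d + t • w with hrdef
  obtain ⟨a, ha, ha1, hm⟩ := step_of_interior hi (r - u)
  have h1 : u + a • (r - u) ∈ K := by
    have := conv_mem hK hu hr ha.le ha1.le
    convert this using 1
    module
  have h2 := hmin _ ⟨h1, by
    simp only [Set.mem_ofPred_eq]
    convert hm using 1
    abel⟩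
  simp only [hrdef, map_add, map_sub, map_smul, smul_eq_mul, gd] at h2
  nlinarith [mul_pos ha ht, mul_neg_of_pos_of_neg (mul_pos ha ht) hw]

/-- Let `p` be on the upper arc with abscissa strictly between those of `u` and an interior point
`z` of `K ∩ (d + K)` (or equal to that of `z`). The vertical chord of `K` through `p` is then longer
than `d`, so that it reaches below `p - d`, by interpolation between the chords through `u` and `z`. -/
lemma Frame.exists_below {d e : Pt} {f k : Pt →L[ℝ] ℝ} (F : Frame d e f k) {K : Set Pt}
    (hK : Convex ℝ K) {u z p : Pt} (hu : u ∈ K) (hud : u - d ∈ K)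
    (hz : z ∈ interior (K ∩ {p | p - d ∈ K})) (hp : p ∈ topArc K d) {t : ℝ} (t0 : 0 < t)
    (t1 : t ≤ 1) (hpt : f p = (1 - t) * f u + t * f z) :
    ∃ s : ℝ, 0 < s ∧ p - d - s • d ∈ K := by
  obtain ⟨a, ha, -, hza, -⟩ := step_of_interior hz d
  have hzd : z - d ∈ K := (interior_subset hz).2
  have m1 := conv_mem hK hu hza t0.le t1
  have m2 := conv_mem hK hud hzd t0.le t1
  set x := (1 - t) • u + t • (z + a • d) with hx
  have hfx : f p = f x := by
    simp only [hx, map_add, map_smul, smul_eq_mul, F.fd]; linarith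
  have hxe := F.fibre hfx
  set b := k x - k p
  have hb : b ≤ 0 := by
    by_contra! h
    exact hp.2.2 b h (hxe ▸ m1)
  refine ⟨t * a - b, by nlinarith [mul_pos t0 ha], ?_⟩
  convert m2 using 1
  have : p = x - b • d := by rw [hxe]; abel
  rw [this, hx]
  module

/-! ### Translates of a convex body -/

lemma mem_tr {p x : Pt} {C : Set Pt} : x ∈ tr p C ↔ x - p ∈ C := by
  constructor
  · rintro ⟨c, hc, rfl⟩
    simpa using hc
  · intro h
    exact ⟨x - p, h, by simp⟩

lemma tr_eq_shift (p₁ p₂ : Pt) (C : Set Pt) : tr p₂ C = {x | x - (p₂ - p₁) ∈ tr p₁ C} := by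
  ext x
  simp only [mem_tr, Set.mem_ofPred_eq]
  rw [show x - (p₂ - p₁) - p₁ = x - p₂ by abel]

lemma tr_body {C : Set Pt} (hC : IsConvexBody C) (p : Pt) : IsConvexBody (tr p C) := by
  obtain ⟨hc, hK, hi⟩ := hC
  refine ⟨hc.image (by fun_prop), hK.translate p, ?_⟩
  have h := (Homeomorph.addLeft p).image_interior C
  have h' : interior (tr p C) = (Homeomorph.addLeft p) '' interior C := h.symm
  rw [h']
  exact hi.image _

lemma exists_splitting {C : Set Pt} (hC : IsConvexBody C) (p₁ p₂ : Pt) (hne : p₁ ≠ p₂)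
    (hint : (interior (tr p₁ C ∩ tr p₂ C)).Nonempty) :
    ∃ (u v : Pt) (l σ₁ σ₂ : Set Pt), SplittingConfig C p₁ p₂ u v l σ₁ σ₂ := by
  obtain ⟨e, f, k, F⟩ := exists_frame (p₂ - p₁) (sub_ne_zero.2 hne.symm)
  have hσ₂ : IsPreconnected (frontier (tr p₂ C) ∩ tr p₁ C) := by
    obtain ⟨h1, h2, h3⟩ := tr_body hC p₂
    rw [tr_eq_shift p₂ p₁ C]
    exact isPreconnected_frontier_inter h2 h1 h3 _
  obtain ⟨hc, hK, hi⟩ := tr_body hC p₁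
  unfold SplittingConfig
  rw [tr_eq_shift p₁ p₂ C] at hint hσ₂ ⊢
  set K := tr p₁ C
  set d := p₂ - p₁
  set K' : Set Pt := {x | x - d ∈ K} with hK'
  have hK'c : Convex ℝ K' := convex_translate hK d
  have hK'cl : IsClosed K' := hc.isClosed.preimage (by fun_prop : Continuous fun p : Pt => p - d)
  have hJ : Convex ℝ (K ∩ K') := hK.inter hK'c
  have hJc : IsCompact (K ∩ K') := hc.inter_right hK'cl
  have hfr : ∀ p, p ∈ frontier K ↔ p ∈ K ∧ p ∉ interior K := by
    intro p; rw [hc.isClosed.frontier_eq]; rfl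
  have hfr' : ∀ p, p ∈ frontier K' ↔ p - d ∈ K ∧ p - d ∉ interior K := by
    intro p; rw [hK'cl.frontier_eq, ← mem_interior_translate]; rfl
  have hfrJ : ∀ p, p ∈ frontier (K ∩ K') ↔ p ∈ K ∩ K' ∧ ¬ (p ∈ interior K ∧ p - d ∈ interior K) := by
    intro p
    rw [hJc.isClosed.frontier_eq, interior_inter, ← mem_interior_translate]; rfl
  obtain ⟨z, hz⟩ := hint
  have hzJ := interior_subset hz
  obtain ⟨a, ha, ha'⟩ := hJc.exists_isMinOn ⟨z, hzJ⟩ f.continuous.continuousOn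
  obtain ⟨b, hb, hb'⟩ := hJc.exists_isMaxOn ⟨z, hzJ⟩ f.continuous.continuousOn
  obtain ⟨u, hu, hua⟩ := F.exists_top hK hc ha.1 ha.2
  obtain ⟨v, hv, hvb⟩ := F.exists_top hK hc hb.1 hb.2
  have hmin : ∀ q ∈ K ∩ K', f u ≤ f q := fun q hq => hua ▸ ha' hq
  have hmax : ∀ q ∈ K ∩ K', f q ≤ f v := fun q hq => hvb ▸ hb' hq
  have huJ : u ∈ K ∩ K' := ⟨hu.1, hu.2.1⟩
  have hvJ : v ∈ K ∩ K' := ⟨hv.1, hv.2.1⟩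
  have huz : f u < f z := by
    by_contra! h
    exact not_mem_interior_of_min f (-e) (by simp [F.fe]) (fun q hq => h.trans (hmin q hq)) hz
  have hzv : f z < f v := by
    by_contra! h
    refine not_mem_interior_of_min (-f) e (by simp [F.fe]) (fun q hq => ?_) hz
    simpa using (hmax q hq).trans h
  have huv : f u < f v := huz.trans hzv
  have hTK : topArc K d ⊆ frontier K := fun q hq =>
    (hfr q).2 ⟨hq.1, topArc_not_interior hq⟩
  have hTJ : topArc K d ⊆ frontier (K ∩ K') := fun q hq =>
    (hfrJ q).2 ⟨⟨hq.1, hq.2.1⟩, fun h => topArc_not_interior hq h.1⟩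
  have huf : u ∈ frontier K' := (hfr' u).2 ⟨hu.2.1,
    not_interior_translate_of_min hK f F.fd (w := -e) (by simp [F.fe]) hu.1 hmin⟩
  have hvf : v ∈ frontier K' := (hfr' v).2 ⟨hv.2.1,
    not_interior_translate_of_min hK (-f) (by simp [F.fd]) (w := e) (by simp [F.fe]) hv.1
      (fun q hq => by simpa using hmax q hq)⟩
  refine ⟨u, v, {x | ∃ t : ℝ, x = u + t • (v - u)}, topArc K d, frontier K' ∩ K, ?_, hTJ hu, hTJ hv,
    rfl, ?_, ?_, ?_, ⟨⟨u, hu⟩, F.isPreconnected_topArc hK hc⟩, ⟨⟨u, huf, hu.1⟩, hσ₂⟩, ?_, ?_, hTK,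
    Set.inter_subset_left⟩
  · rintro rfl; exact lt_irrefl _ huv
  · intro H hH
    exact vanishing_of_minmax hJ hJc.isBounded f huJ hvJ huv hmin hmax hH
  · rintro ⟨t, ht⟩
    have h1 := congrArg f ht
    have h2 := congrArg k ht
    simp only [map_smul, smul_eq_mul, map_sub, F.fd, F.kd] at h1 h2
    have : t = 0 := by
      rcases mul_eq_zero.1 h1.symm with h | h
      · exact h
      · linarith
    rw [this] at h2
    simp at h2
  · ext x
    constructor
    · rintro ⟨hx, t, rfl⟩
      have h1 := hmin _ hx
      have h2 := hmax _ hx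
      simp only [map_add, map_smul, smul_eq_mul, map_sub] at h1 h2
      rw [segment_eq_image']
      refine ⟨t, ⟨?_, ?_⟩, rfl⟩
      · by_contra! h; nlinarith
      · by_contra! h; nlinarith
    · intro hx
      refine ⟨hJ.segment_subset huJ hvJ hx, ?_⟩
      rw [segment_eq_image'] at hx
      obtain ⟨t, -, rfl⟩ := hx
      exact ⟨t, rfl⟩
  · apply Set.Subset.antisymm
    · intro p hp
      obtain ⟨hpJ, hpi⟩ := (hfrJ p).1 hp
      by_cases h : p - d ∈ interior K
      · have hpi' : p ∉ interior K := fun h' => hpi ⟨h', h⟩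
        rcases F.top_or_extreme hK hi hpJ.1 hpi' hpJ.2 with h' | h'
        · exact Or.inl h'
        · refine absurd h (F.not_interior_of_extreme ?_)
          simpa [F.fd] using h'
      · exact Or.inr ⟨(hfr' p).2 ⟨hpJ.2, h⟩, hpJ.1⟩
    · refine Set.union_subset hTJ ?_
      rintro p ⟨hp, hpK⟩
      obtain ⟨h1, h2⟩ := (hfr' p).1 hp
      exact (hfrJ p).2 ⟨⟨hpK, h1⟩, fun h => h2 h.2⟩
  · apply Set.Subset.antisymm
    · rintro p ⟨hp, hpf, hpK⟩
      obtain ⟨hpd, hpi⟩ := (hfr' p).1 hpf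
      by_contra hpuv
      have hup : f u < f p := by
        refine lt_of_le_of_ne (hmin p ⟨hpK, hpd⟩) fun h => hpuv (Or.inl ?_)
        exact (F.topArc_inj hu hp h).symm
      have hpv : f p < f v := by
        refine lt_of_le_of_ne (hmax p ⟨hpK, hpd⟩) fun h => hpuv (Or.inr ?_)
        exact F.topArc_inj hp hv h
      have hbelow : ∃ s : ℝ, 0 < s ∧ p - d - s • d ∈ K := by
        rcases le_total (f p) (f z) with h | h
        · have hpos : 0 < f z - f u := by linarith
          refine F.exists_below hK hu.1 hu.2.1 hz hp (t := (f p - f u) / (f z - f u))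
            (div_pos (by linarith) hpos) (div_le_one_of_le₀ (by linarith) hpos.le) ?_
          field_simp
          ring
        · have hpos : 0 < f v - f z := by linarith
          refine F.exists_below hK hv.1 hv.2.1 hz hp (t := (f v - f p) / (f v - f z))
            (div_pos (by linarith) hpos) (div_le_one_of_le₀ (by linarith) hpos.le) ?_
          field_simp
          ring
      obtain ⟨s, hs, hm⟩ := hbelow
      refine hpi (F.mem_interior hK hi hs one_pos hm (by simpa using hpK) hu.1 hv.1 ?_ ?_)
      · simpa [F.fd] using hup
      · simpa [F.fd] using hpv
    · rintro p (rfl | rfl)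
      · exact ⟨hu, huf, hu.1⟩
      · exact ⟨hv, hvf, hv.1⟩

/-- If `C` is a convex body and `I = C_{p₁} ∩ C_{p₂} ≠ ∅` then `C_{p₁}` and
`C_{p₂}` intersect plainly; moreover, if `p₁ ≠ p₂` and `I` has nonempty interior then there is a
splitting configuration `(u, v, l, σ₁, σ₂)` for `(C, p₁, p₂)`. -/
theorem stmt12 (C : Set Pt) (hC : IsConvexBody C) (p₁ p₂ : Pt)
    (hne : (tr p₁ C ∩ tr p₂ C).Nonempty) :
    PlainlyIntersect (tr p₁ C) (tr p₂ C) ∧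
    (p₁ ≠ p₂ → (interior (tr p₁ C ∩ tr p₂ C)).Nonempty →
      ∃ (u v : Pt) (l σ₁ σ₂ : Set Pt), SplittingConfig C p₁ p₂ u v l σ₁ σ₂) := by
  refine ⟨⟨?_, ?_⟩, fun h1 h2 => exists_splitting hC p₁ p₂ h1 h2⟩
  · obtain ⟨h1, h2, h3⟩ := tr_body hC p₁
    rw [tr_eq_shift p₁ p₂ C]
    exact isPreconnected_frontier_inter h2 h1 h3 _
  · obtain ⟨h1, h2, h3⟩ := tr_body hC p₂
    rw [tr_eq_shift p₂ p₁ C]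
    exact isPreconnected_frontier_inter h2 h1 h3 _
end
end

section
/- Let C be a convex body in ℝ², let p₁ ≠ p₂ be points with I = C_{p₁} ∩ C_{p₂} having nonempty interior, and let (u, v, l, σ₁, σ₂) be a splitting configuration for (C, p₁, p₂). Let p ∈ ℝ² be a point such that p, p₁, p₂ are not collinear. If I ∩ l ⊆ C_p then I ⊆ C_p; and if I ∩ l is contained in the interior of C_p then I is contained in the interior of C_p. -/
/-!
Put `w = v - u` and `d = p₂ - p₁`; these form a basis of the plane. In the affine coordinates
`(x, y) ↦ (u - p₂) + x w + y d` the four corners `(0,0), (1,0), (0,1), (1,1)` of the unit square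
are the points `u - p₂, v - p₂, u - p₁, v - p₁`. They all lie on the boundary of `C`, since `u` and
`v` belong to both arcs `σ₁` and `σ₂`. Let `S` be the convex set `C` in these coordinates. A point
`q = u + s w + α d` of `I` gives `(s, α), (s, α + 1) ∈ S`, and `u, v ∈ C_p` gives
`(μ, lam), (μ + 1, lam) ∈ S`, where `p₂ - p = μ w + lam d` and `μ ≠ 0` by non-collinearity. The
claim `q ∈ C_p` is `(μ + s, lam + α) ∈ S`.

Up to reflections of the square, `μ > 0` and `α ≥ 0` (`unitSquare_core`). The supporting lines of
`S` at the corners `(0,1)` and `(1,1)` then give `0 ≤ s ≤ 1` and `α μ ≤ (1 - lam) (1 - s)`. This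
inequality says exactly that `(μ + s, lam + α)` lies below the polygonal line through `(s, 1 + α)`,
`(1, 1)`, `(1 + μ, lam)`, all of whose vertices belong to `S`; it lies above the segment from
`(μ, lam)` to `(μ + 1, lam)`, so it belongs to `S`.

The interior version follows by perturbing `p`: if `u, v` are in the interior of `C_p`, the first
part applies to every `p'` near `p`, so `q - p' ∈ C` for all those `p'`, that is,
`q - p ∈ interior C`.
-/

open EuclideanGeometry

noncomputable section

/-! ### Convex sets with supporting lines at the corners of the unit square -/

/-- `S` has a supporting line at the point `(cx, cy)`, with normal `(A, B) ≠ 0`. -/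
def HasSupport (S : Set (ℝ × ℝ)) (cx cy : ℝ) : Prop :=
  ∃ A B : ℝ, (A ≠ 0 ∨ B ≠ 0) ∧ ∀ x y : ℝ, (x, y) ∈ S → A * (x - cx) + B * (y - cy) ≤ 0

lemma mem_combo {S : Set (ℝ × ℝ)} (hS : Convex ℝ S) {x y x' y' : ℝ} (t X Y : ℝ)
    (h : (x, y) ∈ S) (h' : (x', y') ∈ S) (h0 : 0 ≤ t) (h1 : t ≤ 1)
    (hX : X = (1 - t) * x + t * x') (hY : Y = (1 - t) * y + t * y') : (X, Y) ∈ S := by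
  have := hS h h' (sub_nonneg.2 h1) h0 (by ring)
  simpa [hX, hY] using this

/-- The planar statement in coordinates, for a translate to the right (`0 < μ`) and a point
on or above the bottom side (`0 ≤ α`). -/
lemma unitSquare_core {S : Set (ℝ × ℝ)} (hS : Convex ℝ S)
    (h01 : (0, 1) ∈ S) (h10 : (1, 0) ∈ S) (h11 : (1, 1) ∈ S)
    (k01 : HasSupport S 0 1) (k11 : HasSupport S 1 1)
    {s α μ lam : ℝ} (hα : 0 ≤ α) (hμ : 0 < μ)
    (hx0 : α = 0 → 0 ≤ s ∧ s ≤ 1) (hx2 : (s, α + 1) ∈ S)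
    (hp0 : (μ, lam) ∈ S) (hp1 : (μ + 1, lam) ∈ S)
    (h00 : (0, 0) ∈ S) : (μ + s, lam + α) ∈ S := by
  rcases hα.eq_or_lt with rfl | hα
  · obtain ⟨hs0, hs1⟩ := hx0 rfl
    exact mem_combo hS s _ _ hp0 hp1 hs0 hs1 (by ring) (by ring)
  have hs0 : 0 ≤ s := by
    obtain ⟨A, B, hne, hAB⟩ := k01
    have e1 := hAB _ _ h00
    have e2 := hAB _ _ h11
    have e3 := hAB _ _ hx2
    by_contra! hs
    have hA : A ≤ 0 := by linarith
    have hB : 0 ≤ B := by linarith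
    have hA0 : A = 0 := by
      by_contra h
      have hA' : A < 0 := lt_of_le_of_ne hA h
      nlinarith [mul_pos_of_neg_of_neg hA' hs, mul_nonneg hB hα.le]
    subst hA0
    have hB0 : B = 0 := by
      by_contra h
      have hB' : 0 < B := lt_of_le_of_ne hB (Ne.symm h)
      nlinarith [mul_pos hB' hα]
    simp [hB0] at hne
  obtain ⟨A, B, hne, hAB⟩ := k11
  have e1 := hAB _ _ h01
  have e2 := hAB _ _ h10
  have e3 := hAB _ _ hx2
  have e4 := hAB _ _ hp1
  have hA : 0 ≤ A := by linarith
  have hB : 0 ≤ B := by linarith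
  have hBpos : 0 < B := by
    refine lt_of_le_of_ne hB fun h => ?_
    subst h
    have hA' : 0 < A := lt_of_le_of_ne hA (by rcases hne with h | h <;> [exact h.symm; simp at h])
    nlinarith [mul_pos hA' hμ]
  have hs1 : s < 1 := by
    by_contra! hs
    nlinarith [mul_pos hBpos hα, mul_nonneg hA (sub_nonneg.2 hs)]
  have key : α * μ ≤ (1 - lam) * (1 - s) := by
    have f1 : μ * (α * B) ≤ μ * ((1 - s) * A) :=
      mul_le_mul_of_nonneg_left (by linarith) hμ.le
    have f2 : (1 - s) * (μ * A) ≤ (1 - s) * ((1 - lam) * B) :=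
      mul_le_mul_of_nonneg_left (by linarith) (by linarith)
    refine le_of_mul_le_mul_right ?_ hBpos
    linarith
  have hbot : (μ + s, lam) ∈ S :=
    mem_combo hS s _ _ hp0 hp1 hs0 hs1.le (by ring) (by ring)
  have hs' : 0 < 1 - s := by linarith
  obtain ⟨h, hh, htop⟩ : ∃ h, lam + α ≤ h ∧ (μ + s, h) ∈ S := by
    rcases le_total (μ + s) 1 with hm | hm
    -- on the edge from `(s, 1 + α)` to `(1, 1)`
    · refine ⟨1 + α - α * μ / (1 - s), ?_, ?_⟩
      · have : α * μ / (1 - s) ≤ 1 - lam := (div_le_iff₀ hs').2 key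
        linarith
      · refine mem_combo hS (μ / (1 - s)) _ _ hx2 h11 (by positivity)
          ((div_le_one hs').2 (by linarith)) ?_ ?_
        · field_simp
          ring
        · ring
    -- on the edge from `(1, 1)` to `(1 + μ, lam)`
    · refine ⟨lam + (1 - lam) * (1 - s) / μ, ?_, ?_⟩
      · have : α ≤ (1 - lam) * (1 - s) / μ := (le_div_iff₀ hμ).2 key
        linarith
      · refine mem_combo hS ((μ + s - 1) / μ) _ _ h11 hp1 (div_nonneg (by linarith) hμ.le)
          ((div_le_one hμ).2 (by linarith)) ?_ ?_
        · field_simp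
          ring
        · field_simp
          ring
  have hpos : 0 < h - lam := by linarith
  refine mem_combo hS (α / (h - lam)) _ _ hbot htop (by positivity)
    ((div_le_one hpos).2 (by linarith)) (by ring) ?_
  field_simp
  ring

lemma HasSupport.flip_x {S : Set (ℝ × ℝ)} {cx cy : ℝ} (h : HasSupport S (1 - cx) cy) :
    HasSupport {z | (1 - z.1, z.2) ∈ S} cx cy := by
  obtain ⟨A, B, hne, hAB⟩ := h
  refine ⟨-A, B, by simpa using hne, fun x y hxy => ?_⟩
  have := hAB _ _ hxy
  linarith

lemma HasSupport.flip_y {S : Set (ℝ × ℝ)} {cx cy : ℝ} (h : HasSupport S cx (1 - cy)) :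
    HasSupport {z | (z.1, 1 - z.2) ∈ S} cx cy := by
  obtain ⟨A, B, hne, hAB⟩ := h
  refine ⟨A, -B, by simpa using hne, fun x y hxy => ?_⟩
  have := hAB _ _ hxy
  linarith

/-- Removes the restriction `0 < μ` from `unitSquare_core` by reflecting in `x = 1 / 2`. -/
lemma unitSquare_above {S : Set (ℝ × ℝ)} (hS : Convex ℝ S)
    (h00 : (0, 0) ∈ S) (h01 : (0, 1) ∈ S) (h10 : (1, 0) ∈ S) (h11 : (1, 1) ∈ S)
    (k01 : HasSupport S 0 1) (k11 : HasSupport S 1 1)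
    {s α μ lam : ℝ} (hα : 0 ≤ α) (hμ : μ ≠ 0)
    (hx0 : α = 0 → 0 ≤ s ∧ s ≤ 1) (hx2 : (s, α + 1) ∈ S)
    (hp0 : (μ, lam) ∈ S) (hp1 : (μ + 1, lam) ∈ S) : (μ + s, lam + α) ∈ S := by
  rcases hμ.lt_or_gt with hμ | hμ
  · have hS' : Convex ℝ {z : ℝ × ℝ | (1 - z.1, z.2) ∈ S} := by
      intro z hz z' hz' a b ha hb hab
      have := hS hz hz' ha hb hab
      have e : (1 - (a • z + b • z').1, (a • z + b • z').2)
          = a • (1 - z.1, z.2) + b • (1 - z'.1, z'.2) := by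
        ext
        · simp
          linear_combination -hab
        · simp
      simpa only [Set.mem_ofPred_eq, e] using this
    have := unitSquare_core (s := 1 - s) (α := α) (μ := -μ) (lam := lam) hS'
      (by simpa using h11) (by simpa using h00) (by simpa using h01)
      (HasSupport.flip_x (by simpa using k11)) (HasSupport.flip_x (by simpa using k01))
      hα (by linarith) (fun h => by constructor <;> linarith [hx0 h])
      (by simpa using hx2) (by simpa [add_comm] using hp1) (by simpa using hp0)
      (by simpa using h10)
    have e : 1 - (-μ + (1 - s)) = μ + s := by ring
    simpa only [Set.mem_ofPred_eq, e] using this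
  · exact unitSquare_core hS h01 h10 h11 k01 k11 hα hμ hx0 hx2 hp0 hp1 h00

/-- If a convex set contains the unit square and has supporting lines at its corners, a
translate `[(μ, lam), (μ + 1, lam)]` of the bottom side and two points `(s, α)`, `(s, α + 1)`,
then it contains `(μ + s, lam + α)`. -/
lemma unitSquare_main {S : Set (ℝ × ℝ)} (hS : Convex ℝ S)
    (h00 : (0, 0) ∈ S) (h01 : (0, 1) ∈ S) (h10 : (1, 0) ∈ S) (h11 : (1, 1) ∈ S)
    (k00 : HasSupport S 0 0) (k01 : HasSupport S 0 1)
    (k10 : HasSupport S 1 0) (k11 : HasSupport S 1 1)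
    {s α μ lam : ℝ} (hμ : μ ≠ 0)
    (hx0 : α = 0 → 0 ≤ s ∧ s ≤ 1) (hx1 : (s, α) ∈ S) (hx2 : (s, α + 1) ∈ S)
    (hp0 : (μ, lam) ∈ S) (hp1 : (μ + 1, lam) ∈ S) : (μ + s, lam + α) ∈ S := by
  rcases le_total 0 α with hα | hα
  · exact unitSquare_above hS h00 h01 h10 h11 k01 k11 hα hμ hx0 hx2 hp0 hp1
  · have hS' : Convex ℝ {z : ℝ × ℝ | (z.1, 1 - z.2) ∈ S} := by
      intro z hz z' hz' a b ha hb hab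
      have := hS hz hz' ha hb hab
      have e : ((a • z + b • z').1, 1 - (a • z + b • z').2)
          = a • (z.1, 1 - z.2) + b • (z'.1, 1 - z'.2) := by
        ext
        · simp
        · simp
          linear_combination -hab
      simpa only [Set.mem_ofPred_eq, e] using this
    have := unitSquare_above (s := s) (α := -α) (μ := μ) (lam := 1 - lam) hS'
      (by simpa using h01) (by simpa using h00) (by simpa using h11) (by simpa using h10)
      (HasSupport.flip_y (by simpa using k00)) (HasSupport.flip_y (by simpa using k10))
      (by linarith) hμ (fun h => hx0 (by linarith))
      (by simpa using hx1) (by simpa using hp0) (by simpa using hp1)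
    have e : 1 - (1 - lam + -α) = lam + α := by ring
    simpa only [Set.mem_ofPred_eq, e] using this

/-! ### Coordinates in the plane, translates and supporting lines -/

lemma exists_coords {d w : Pt} (hw : w ≠ 0) (h : ¬ ∃ t : ℝ, d = t • w) (z : Pt) :
    ∃ x y : ℝ, z = x • w + y • d := by
  have hD : w 0 * d 1 - w 1 * d 0 ≠ 0 := by
    intro h0
    by_cases hw0 : w 0 = 0
    · have hw1 : w 1 ≠ 0 := by
        intro hw1
        apply hw
        ext i
        fin_cases i <;> simp [hw0, hw1]
      refine h ⟨d 1 / w 1, ?_⟩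
      have hd : d 0 = 0 := by
        rw [hw0] at h0
        have : w 1 * d 0 = 0 := by linarith
        exact (mul_eq_zero.1 this).resolve_left hw1
      ext i
      fin_cases i
      · simp [hw0, hd]
      · simp [hw1]
    · refine h ⟨d 0 / w 0, ?_⟩
      ext i
      fin_cases i
      · simp [hw0]
      · simp
        field_simp
        linarith
  refine ⟨(z 0 * d 1 - z 1 * d 0) / (w 0 * d 1 - w 1 * d 0),
    (w 0 * z 1 - w 1 * z 0) / (w 0 * d 1 - w 1 * d 0), ?_⟩
  ext i
  fin_cases i
  · simp only [Fin.zero_eta, PiLp.add_apply, PiLp.smul_apply, smul_eq_mul]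
    rw [div_mul_eq_mul_div, div_mul_eq_mul_div, ← add_div, eq_div_iff hD]
    ring
  · simp only [Fin.mk_one, PiLp.add_apply, PiLp.smul_apply, smul_eq_mul]
    rw [div_mul_eq_mul_div, div_mul_eq_mul_div, ← add_div, eq_div_iff hD]
    ring

lemma mem_frontier_tr {p x : Pt} {C : Set Pt} : x ∈ frontier (tr p C) ↔ x - p ∈ frontier C := by
  rw [← mem_tr (C := frontier C)]
  exact Set.ext_iff.1 ((Homeomorph.addLeft p).image_frontier C).symm x

lemma mem_interior_tr {p x : Pt} {C : Set Pt} : x ∈ interior (tr p C) ↔ x - p ∈ interior C := by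
  rw [← mem_tr (C := interior C)]
  exact Set.ext_iff.1 ((Homeomorph.addLeft p).image_interior C).symm x

/-- A boundary point of `C` has a supporting line, expressed in the affine coordinates
`(x, y) ↦ b + x w + y d`. -/
lemma hasSupport_of_frontier {C : Set Pt} (hC : IsConvexBody C) {b d w : Pt} (hw : w ≠ 0)
    (h : ¬ ∃ t : ℝ, d = t • w) {cx cy : ℝ} (hz : b + cx • w + cy • d ∈ frontier C) :
    HasSupport {z : ℝ × ℝ | b + z.1 • w + z.2 • d ∈ C} cx cy := by
  obtain ⟨hcomp, hconv, c, hc⟩ := hC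
  obtain ⟨f, hf⟩ := geometric_hahn_banach_open_point hconv.interior isOpen_interior hz.2
  have hle : ∀ y ∈ C, f y ≤ f (b + cx • w + cy • d) := by
    intro y hy
    have hy' : y ∈ closure (interior C) := by
      rw [hconv.closure_interior_eq_closure_of_nonempty_interior ⟨c, hc⟩]
      exact subset_closure hy
    have hcl : IsClosed {y | f y ≤ f (b + cx • w + cy • d)} :=
      isClosed_le f.continuous continuous_const
    exact closure_minimal (fun a ha => (hf a ha).le) hcl hy'
  refine ⟨f w, f d, ?_, fun x y hxy => ?_⟩
  · by_contra! h0
    obtain ⟨x, y, hxy⟩ := exists_coords hw h (c - (b + cx • w + cy • d))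
    have h1 := hf c hc
    have h2 : f c - f (b + cx • w + cy • d) = 0 := by
      rw [← map_sub, hxy]
      simp [h0]
    linarith
  · have := hle _ hxy
    simp only [map_add, map_smul, smul_eq_mul] at this
    linarith

/-! ### Containment in a third translate -/

/-- The first half of the theorem; of the splitting configuration it needs only that `u` and `v`
are common boundary points, spanning a chord of the intersection not parallel to `p₁ p₂`. -/
lemma subset_of_chord {C : Set Pt} (hC : IsConvexBody C) {p₁ p₂ u v : Pt} (huv : u ≠ v)
    (hu1 : u ∈ frontier (tr p₁ C)) (hu2 : u ∈ frontier (tr p₂ C))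
    (hv1 : v ∈ frontier (tr p₁ C)) (hv2 : v ∈ frontier (tr p₂ C))
    (hpar : ¬ ∃ t : ℝ, p₂ - p₁ = t • (v - u))
    (hl : ∀ t : ℝ, u + t • (v - u) ∈ tr p₁ C ∩ tr p₂ C → 0 ≤ t ∧ t ≤ 1)
    {p : Pt} (hcol : ¬ Collinear ℝ ({p, p₁, p₂} : Set Pt))
    (hu : u ∈ tr p C) (hv : v ∈ tr p C) : tr p₁ C ∩ tr p₂ C ⊆ tr p C := by
  intro q hq
  have hw : v - u ≠ 0 := sub_ne_zero.2 huv.symm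
  have hcl : frontier C ⊆ C := hC.1.isClosed.frontier_subset
  rw [mem_frontier_tr] at hu1 hu2 hv1 hv2
  rw [mem_tr] at hu hv ⊢
  obtain ⟨s, α, hx⟩ := exists_coords hw hpar (q - u)
  obtain ⟨μ, lam, hy⟩ := exists_coords hw hpar (p₂ - p)
  have hqe : q = u + (s • (v - u) + α • (p₂ - p₁)) := by rw [← hx]; abel
  have hpe : p = p₂ - (μ • (v - u) + lam • (p₂ - p₁)) := by rw [← hy]; abel
  have hμ : μ ≠ 0 := by
    rintro rfl
    apply hcol
    refine collinear_insert_of_mem_affineSpan_pair ?_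
    have e : p = AffineMap.lineMap p₁ p₂ (1 - lam) := by
      rw [AffineMap.lineMap_apply_module', hpe]
      module
    rw [e]
    exact AffineMap.lineMap_mem_affineSpan_pair _ _ _
  have hS : Convex ℝ {z : ℝ × ℝ | (u - p₂) + z.1 • (v - u) + z.2 • (p₂ - p₁) ∈ C} := by
    intro z hz z' hz' a b ha hb hab
    have := hC.2.1 hz hz' ha hb hab
    have e : (u - p₂) + (a • z + b • z').1 • (v - u) + (a • z + b • z').2 • (p₂ - p₁)
        = a • ((u - p₂) + z.1 • (v - u) + z.2 • (p₂ - p₁))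
          + b • ((u - p₂) + z'.1 • (v - u) + z'.2 • (p₂ - p₁)) := by
      obtain rfl : b = 1 - a := by linarith
      simp only [Prod.fst_add, Prod.snd_add, Prod.smul_fst, Prod.smul_snd, smul_eq_mul]
      module
    simpa only [Set.mem_ofPred_eq, e] using this
  have c00 : (u - p₂) + (0 : ℝ) • (v - u) + (0 : ℝ) • (p₂ - p₁) ∈ frontier C := by
    convert hu2 using 1
    module
  have c01 : (u - p₂) + (0 : ℝ) • (v - u) + (1 : ℝ) • (p₂ - p₁) ∈ frontier C := by
    convert hu1 using 1
    module
  have c10 : (u - p₂) + (1 : ℝ) • (v - u) + (0 : ℝ) • (p₂ - p₁) ∈ frontier C := by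
    convert hv2 using 1
    module
  have c11 : (u - p₂) + (1 : ℝ) • (v - u) + (1 : ℝ) • (p₂ - p₁) ∈ frontier C := by
    convert hv1 using 1
    module
  have hq1 := mem_tr.1 hq.1
  have hq2 := mem_tr.1 hq.2
  have := unitSquare_main (s := s) (α := α) (μ := μ) (lam := lam) hS
    (hcl c00) (hcl c01) (hcl c10) (hcl c11)
    (hasSupport_of_frontier hC hw hpar c00) (hasSupport_of_frontier hC hw hpar c01)
    (hasSupport_of_frontier hC hw hpar c10) (hasSupport_of_frontier hC hw hpar c11)
    hμ
    (by
      rintro rfl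
      apply hl
      convert hq using 1
      rw [hqe]
      module)
    (by
      rw [Set.mem_ofPred_eq]
      convert hq2 using 1
      rw [hqe]
      module)
    (by
      rw [Set.mem_ofPred_eq]
      convert hq1 using 1
      rw [hqe]
      module)
    (by
      rw [Set.mem_ofPred_eq]
      convert hu using 1
      rw [hpe]
      module)
    (by
      rw [Set.mem_ofPred_eq]
      convert hv using 1
      rw [hpe]
      module)
  rw [Set.mem_ofPred_eq] at this
  convert this using 1
  rw [hqe, hpe]
  module

/-- Let `(u, v, l, σ₁, σ₂)` be a splitting configuration for `(C, p₁, p₂)`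
(`p₁ ≠ p₂`, `I = C_{p₁} ∩ C_{p₂}` with nonempty interior) and let `p` be such that `p, p₁, p₂`
are not collinear.  If `I ∩ l ⊆ C_p` then `I ⊆ C_p`; and if `I ∩ l ⊆ (C_p)°` then
`I ⊆ (C_p)°`. -/
theorem stmt14 (C : Set Pt) (hC : IsConvexBody C) (p₁ p₂ : Pt) (hp : p₁ ≠ p₂)
    (hI : (interior (tr p₁ C ∩ tr p₂ C)).Nonempty)
    (u v : Pt) (l σ₁ σ₂ : Set Pt) (hsc : SplittingConfig C p₁ p₂ u v l σ₁ σ₂)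
    (p : Pt) (hcol : ¬ Collinear ℝ ({p, p₁, p₂} : Set Pt)) :
    ((tr p₁ C ∩ tr p₂ C) ∩ l ⊆ tr p C → tr p₁ C ∩ tr p₂ C ⊆ tr p C) ∧
    ((tr p₁ C ∩ tr p₂ C) ∩ l ⊆ interior (tr p C) →
      tr p₁ C ∩ tr p₂ C ⊆ interior (tr p C)) := by
  obtain ⟨huv, -, -, hl, -, hpar, hseg, -, -, -, hint, hs1, hs2⟩ := hsc
  have hu : u ∈ σ₁ ∩ σ₂ := hint ▸ Set.mem_insert _ _
  have hv : v ∈ σ₁ ∩ σ₂ := hint ▸ Set.mem_insert_of_mem _ rfl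
  have hw : v - u ≠ 0 := sub_ne_zero.2 huv.symm
  have hl' : ∀ t : ℝ, u + t • (v - u) ∈ tr p₁ C ∩ tr p₂ C → 0 ≤ t ∧ t ≤ 1 := by
    intro t ht
    have hmem : u + t • (v - u) ∈ segment ℝ u v := by
      rw [← hseg, hl]
      exact ⟨ht, t, rfl⟩
    rw [segment_eq_image'] at hmem
    obtain ⟨r, hr, he⟩ := hmem
    obtain rfl : r = t := smul_left_injective ℝ hw (add_left_cancel he)
    exact hr
  have huI : u ∈ (tr p₁ C ∩ tr p₂ C) ∩ l := hseg ▸ left_mem_segment ℝ u v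
  have hvI : v ∈ (tr p₁ C ∩ tr p₂ C) ∩ l := hseg ▸ right_mem_segment ℝ u v
  have key : ∀ p' : Pt, ¬ Collinear ℝ ({p', p₁, p₂} : Set Pt) → u ∈ tr p' C → v ∈ tr p' C →
      tr p₁ C ∩ tr p₂ C ⊆ tr p' C := fun p' hc' h1 h2 =>
    subset_of_chord hC huv (hs1 hu.1) (hs2 hu.2) (hs1 hv.1) (hs2 hv.2) hpar hl' hc' h1 h2
  refine ⟨fun h => key p hcol (h huI) (h hvI), fun h q hq => ?_⟩
  have hline : ∀ p' : Pt, Collinear ℝ ({p', p₁, p₂} : Set Pt) → p' ∈ line[ℝ, p₁, p₂] :=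
    fun p' hc' => hc'.mem_affineSpan_of_mem_of_ne (by simp) (by simp) (by simp) hp
  have hclosed : IsClosed (line[ℝ, p₁, p₂] : Set Pt) :=
    AffineSubspace.closed_of_finiteDimensional _
  have hp_off : ∀ᶠ p' in nhds p, p' ∉ (line[ℝ, p₁, p₂] : Set Pt) :=
    hclosed.isOpen_compl.mem_nhds fun hmem =>
      hcol (collinear_insert_of_mem_affineSpan_pair hmem)
  have near : ∀ z : Pt, z ∈ interior (tr p C) → ∀ᶠ p' in nhds p, z ∈ tr p' C := by
    intro z hz
    have hcont : ContinuousAt (fun p' : Pt => z - p') p := by fun_prop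
    have hnhds := hcont.eventually (isOpen_interior.mem_nhds (mem_interior_tr.1 hz))
    filter_upwards [hnhds] with p' hp'
    exact mem_tr.2 (interior_subset hp')
  have hev : ∀ᶠ p' in nhds p, q - p' ∈ C := by
    filter_upwards [hp_off, near u (h huI), near v (h hvI)] with p' h0 h1 h2
    exact mem_tr.1 (key p' (fun hc' => h0 (hline p' hc')) h1 h2 hq)
  rw [mem_interior_tr, mem_interior_iff_mem_nhds]
  -- `y ↦ q - y` is an involution exchanging `p` and `q - p`
  have hcont : Filter.Tendsto (fun y : Pt => q - y) (nhds (q - p)) (nhds p) := by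
    have : ContinuousAt (fun y : Pt => q - y) (q - p) := by fun_prop
    simpa [ContinuousAt] using this
  filter_upwards [hcont.eventually hev] with y hy
  simpa using hy
end
end

section
/- Let C be a convex body in ℝ² and let p₁, p₂ ∈ ℝ² be points such that I = C_{p₁} ∩ C_{p₂} has nonempty interior. For any point p ∈ ℝ² such that p, p₁, p₂ are not collinear, if I ∩ C_p ≠ ∅ then I and C_p intersect plainly. -/
/-!
Write `I = C_{p₁} ∩ C_{p₂}` and `D = C_p`. The proof compares normals. If a linear functional `n`
supports `D` at a point of `I`, then comparing the support functions of the translates shows that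
`n` lies in the cone `N` of functionals nonnegative on `p₁ - p` and `p₂ - p` (`support_le`), and in
its interior if the point is interior to `I` (`support_lt`). A functional which supports `C_{pᵢ}` at
a point of `D` is nonpositive on `pᵢ - p`, and one which strictly separates a point of `D` from
`C_{pᵢ}` is negative there. Noncollinearity makes `N` pointed.

The planar fact tying this together is `chordFun_lt`: let `n, n'` be maximal at `y, y'` over a set
containing `x`, so that the set lies in a wedge. If `x` is on the apex side of the chord `y y'`, any
functional larger at `x` than at `y` and `y'` is a nonnegative combination of `n` and `n'`.

For `∂D ∩ I`, take `y, y'` in it with normals in `N`. A point of the cap of `D` on the apex side of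
`y y'` that missed some `C_{pᵢ}` would be separated from it by a functional in the cone of `n, n'`,
hence in `N`, which is impossible. So the cap lies in `I`, and its boundary arc joins `y` to `y'`.

For `∂I ∩ D`, take `x₁, x₃` in it. If neither cap of `I` cut off by `x₁ x₃` lies in `D`, then `∂D`
has points `y, y'` in the interior of `I` on the two sides of the chord. Their normals lie in the
interior of `N` while those at `x₁, x₃` do not, contradicting the alternation of the four points
(`no_alternation`). So one cap lies in `D`, and its boundary arc joins `x₁` to `x₃`.

In both cases, when the chord itself lies in the boundary it serves as the connecting arc; otherwise
the arc comes from radial projection from a point of the chord (`exists_arc`).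
-/

open EuclideanGeometry

noncomputable section

/-! ### Arcs and supporting lines -/

/-- The radial projection of the plane minus `m` onto `∂M`, from an interior point `m`, carries the
broken line `a w b` to a connected subset of `∂M` on the side of `w` of the chord `a b`. -/
lemma exists_arc {M : Set Pt} (hM : Convex ℝ M) (hb : Bornology.IsBounded M) {m a b w : Pt}
    (hm : m ∈ interior M) (ha : a ∈ frontier M) (hb' : b ∈ frontier M)
    (φ : Pt →L[ℝ] ℝ) (hφa : φ a = φ m) (hφb : φ b = φ m) (hw : φ m < φ w) :
    ∃ S : Set Pt, S ⊆ frontier M ∩ {x | φ m ≤ φ x} ∧ a ∈ S ∧ b ∈ S ∧ IsPreconnected S := by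
  set N : Set Pt := (fun x => m + x) ⁻¹' M with hN
  let e : Pt ≃ₜ Pt := Homeomorph.addLeft m
  have hNe : N = e ⁻¹' M := rfl
  have hNc : Convex ℝ N := hM.translate_preimage_right m
  have hN0 : N ∈ nhds (0 : Pt) := by
    have : (0 : Pt) ∈ interior N := by
      rw [hNe, ← e.preimage_interior]; simpa [e] using hm
    exact mem_interior_iff_mem_nhds.1 this
  have hNb : Bornology.IsVonNBounded ℝ N := by
    rw [NormedSpace.isVonNBounded_iff]
    have : N = (fun x => -m + x) '' M := by
      ext x; simp [hN]
    rw [this]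
    exact (IsometryEquiv.addLeft (-m)).isometry.lipschitz.isBounded_image hb
  have hfr : ∀ x, x ∈ frontier N ↔ m + x ∈ frontier M := by
    intro x; rw [hNe, ← e.preimage_frontier]; simp [e]
  have hgc : Continuous (gauge N) := continuous_gauge hNc hN0
  have hpos : ∀ x, x ≠ m → 0 < gauge N (x - m) := by
    intro x hx
    exact (gauge_pos (absorbent_nhds_zero hN0) hNb).2 (sub_ne_zero.2 hx)
  let r : Pt → Pt := fun x => m + (gauge N (x - m))⁻¹ • (x - m)
  have hdisj : Disjoint (interior M) (frontier M) := disjoint_interior_frontier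
  have ham : a ≠ m := fun h => hdisj.le_bot ⟨hm, h ▸ ha⟩
  have hbm : b ≠ m := fun h => hdisj.le_bot ⟨hm, h ▸ hb'⟩
  have key : ∀ a' : Pt, a' ≠ m → φ a' = φ m → ∀ x ∈ segment ℝ a' w, x ≠ m ∧ φ m ≤ φ x := by
    rintro a' ha' hφ x ⟨s, t, hs, ht, hst, rfl⟩
    have hx : φ (s • a' + t • w) = s * φ a' + t * φ w := by simp
    obtain rfl : s = 1 - t := by linarith
    constructor
    · intro h
      rw [h, hφ] at hx
      have : t = 0 := by nlinarith
      subst this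
      apply ha'; simpa using h
    · rw [hx, hφ]; nlinarith
  have hP : ∀ x ∈ segment ℝ a w ∪ segment ℝ b w, x ≠ m ∧ φ m ≤ φ x := by
    rintro x (hx | hx)
    · exact key a ham hφa x hx
    · exact key b hbm hφb x hx
  have hfix : ∀ a', a' ∈ frontier M → r a' = a' := by
    intro a' h
    have : gauge N (a' - m) = 1 := by
      rw [gauge_eq_one_iff_mem_frontier hNc hN0, hfr]; simpa using h
    simp [r, this]
  refine ⟨r '' (segment ℝ a w ∪ segment ℝ b w), ?_, ?_, ?_, ?_⟩
  · rintro _ ⟨x, hx, rfl⟩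
    obtain ⟨h1, h2⟩ := hP x hx
    have hp := hpos x h1
    constructor
    · rw [← hfr, ← gauge_eq_one_iff_mem_frontier hNc hN0, gauge_smul_of_nonneg (by positivity)]
      simp [hp.ne']
    · have : φ (r x) = φ m + (gauge N (x - m))⁻¹ * (φ x - φ m) := by simp [r]
      simp only [Set.mem_ofPred_eq, this]
      have : 0 ≤ (gauge N (x - m))⁻¹ * (φ x - φ m) :=
        mul_nonneg (by positivity) (by linarith)
      linarith
  · exact ⟨a, Or.inl (left_mem_segment ..), hfix a ha⟩
  · exact ⟨b, Or.inr (left_mem_segment ..), hfix b hb'⟩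
  · apply IsPreconnected.image
    · exact IsPreconnected.union w (right_mem_segment ..) (right_mem_segment ..)
        (convex_segment a w).isPreconnected (convex_segment b w).isPreconnected
    · apply ContinuousOn.add continuousOn_const
      refine ContinuousOn.fun_smul ?_ ?_
      · apply ContinuousOn.inv₀
        · exact (hgc.comp (continuous_id.sub continuous_const)).continuousOn
        · intro x hx; exact (hpos x (hP x hx).1).ne'
      · fun_prop

/-- A segment joining a point of `D` to a point outside `D` meets `∂D`. -/
lemma exists_mem_segment_frontier {D : Set Pt} {q x : Pt} (hq : q ∈ D) (hx : x ∉ D) :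
    ∃ y ∈ segment ℝ q x, y ∈ frontier D := by
  by_contra! h
  have hsub : segment ℝ q x ⊆ interior D ∪ (closure D)ᶜ := by
    intro y hy
    by_cases h1 : y ∈ interior D
    · exact Or.inl h1
    · exact Or.inr fun h2 => h y hy ⟨h2, h1⟩
  have hq' : q ∈ interior D := by
    rcases hsub (left_mem_segment ..) with h1 | h1
    · exact h1
    · exact absurd (subset_closure hq) h1
  have := (convex_segment q x).isPreconnected.subset_left_of_subset_union isOpen_interior
    isClosed_closure.isOpen_compl
    (Set.disjoint_left.2 fun y hy hy' => hy' (subset_closure (interior_subset hy))) hsub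
    ⟨q, left_mem_segment .., hq'⟩
  exact hx (interior_subset (this (right_mem_segment ..)))

/-- Supporting line at a boundary point of a convex body. -/
lemma exists_support_s17 {M : Set Pt} (hM : Convex ℝ M) (hi : (interior M).Nonempty) {x : Pt}
    (hx : x ∈ frontier M) :
    ∃ n : Pt →L[ℝ] ℝ, (∀ y ∈ M, n y ≤ n x) ∧ ∀ y ∈ interior M, n y < n x := by
  obtain ⟨n, hn⟩ := geometric_hahn_banach_open_point hM.interior isOpen_interior hx.2
  refine ⟨n, fun y hy => ?_, hn⟩
  have h : closure (interior M) ⊆ {y | n y ≤ n x} :=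
    closure_minimal (fun y hy => (hn y hy).le) (isClosed_le n.continuous continuous_const)
  rw [hM.closure_interior_eq_closure_of_nonempty_interior hi] at h
  exact h (subset_closure hy)

lemma exists_coord (g : Pt →L[ℝ] ℝ) : ∃ a b : ℝ, ∀ x, g x = a * x 0 + b * x 1 := by
  refine ⟨g (EuclideanSpace.single 0 1), g (EuclideanSpace.single 1 1), fun x => ?_⟩
  have hx : x = x 0 • EuclideanSpace.single 0 (1 : ℝ) + x 1 • EuclideanSpace.single 1 (1 : ℝ) := by
    ext i; fin_cases i <;> simp
  conv_lhs => rw [hx]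
  simp only [map_add, map_smul, smul_eq_mul]
  ring

/-! ### The wedge spanned by two supporting lines -/

/-- Under the stated inequalities `n` and `n'` are linearly independent, hence span the dual. -/
lemma exists_comb {n n' : Pt →L[ℝ] ℝ} {e y y' : Pt} (he : 0 < n e) (he' : 0 ≤ n' e)
    (h : n y' < n y) (h' : n' y < n' y') (g : Pt →L[ℝ] ℝ) :
    ∃ α β : ℝ, ∀ x, g x = α * n x + β * n' x := by
  obtain ⟨a, b, hn⟩ := exists_coord n
  obtain ⟨a', b', hn'⟩ := exists_coord n'
  obtain ⟨c, d, hg⟩ := exists_coord g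
  have hdet : a * b' - b * a' ≠ 0 := by
    intro h0
    -- dependence forces `n' = l • n` with `l` determined by the values at `e`
    have hdep : ∀ x, n' x * n e = n' e * n x := by
      intro x
      rw [hn, hn, hn', hn']
      linear_combination (x 1 * e 0 - x 0 * e 1) * h0
    nlinarith [hdep y, hdep y', mul_lt_mul_of_pos_right h' he, mul_le_mul_of_nonneg_left h.le he']
  refine ⟨(c * b' - d * a') / (a * b' - b * a'), (a * d - b * c) / (a * b' - b * a'), fun x => ?_⟩
  rw [hn, hn', hg, div_mul_eq_mul_div, div_mul_eq_mul_div, ← add_div, eq_div_iff hdet]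
  ring

/-- Coordinate form of `chordFun_lt`: with the apex of the wedge `n ≤ n y`, `n' ≤ n' y'` as origin and
`n`, `n'` as coordinates, `y = (0, -s)`, `y' = (-t, 0)` and `x = (-c, -d)`. The functional with
coefficients `α, β` is larger at `x` than at `y` and `y'`, and lies outside the cone `0 ≤ α, β`. -/
lemma side_of_not_cone {s t c d α β : ℝ} (hs : 0 < s) (ht : 0 < t) (hc : 0 ≤ c) (hd : 0 ≤ d)
    (hαβ : α < 0 ∨ β < 0) (h1 : α * c < β * (s - d)) (h2 : β * d < α * (t - c)) :
    s * t < s * c + t * d := by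
  by_contra! hle
  have hct : c ≤ t := by nlinarith
  have hds : d ≤ s := by nlinarith
  have hα : α < 0 := by
    by_contra! h
    have hb : β < 0 := by rcases hαβ with h' | h' <;> linarith
    nlinarith [mul_nonneg h hc, mul_nonneg (neg_nonneg.2 hb.le) (sub_nonneg.2 hds)]
  have hβ : β < 0 := by
    by_contra! h
    nlinarith [mul_nonneg h hd, mul_nonneg (neg_nonneg.2 hα.le) (sub_nonneg.2 hct)]
  have h3 : -β * (s - d) < -α * c := by linarith
  have h4 : -α * (t - c) < -β * d := by linarith
  have h5 : (-β * (s - d)) * (-α * (t - c)) < (-α * c) * (-β * d) :=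
    mul_lt_mul'' h3 h4 (mul_nonneg (by linarith) (by linarith))
      (mul_nonneg (by linarith) (by linarith))
  have h6 : 0 < (α * β) * (c * d - (s - d) * (t - c)) := by nlinarith
  have h7 : 0 < α * β := mul_pos_of_neg_of_neg hα hβ
  have h8 : 0 < c * d - (s - d) * (t - c) := pos_of_mul_pos_right h6 h7.le
  nlinarith

/-- The functional vanishing along the line `y y'` which increases towards the apex of the wedge
`n ≤ n y`, `n' ≤ n' y'`. -/
def chordFun (n n' : Pt →L[ℝ] ℝ) (y y' : Pt) : Pt →L[ℝ] ℝ :=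
  (n' y' - n' y) • n + (n y - n y') • n'

lemma chordFun_apply (n n' : Pt →L[ℝ] ℝ) (y y' x : Pt) :
    chordFun n n' y y' x = (n' y' - n' y) * n x + (n y - n y') * n' x := by
  simp [chordFun]

/-- A point `x` of the wedge at which some functional `g` outside the cone spanned by `n, n'` exceeds
its values at `y` and `y'` lies strictly on the side of the chord `y y'` away from the apex. -/
lemma chordFun_lt {n n' g : Pt →L[ℝ] ℝ} {y y' x e : Pt}
    (he : 0 < n e) (he' : 0 ≤ n' e) (h : n y' < n y) (h' : n' y < n' y')
    (hx : n x ≤ n y) (hx' : n' x ≤ n' y') (hg : g y < g x) (hg' : g y' < g x)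
    (hcone : ∀ α β : ℝ, 0 ≤ α → 0 ≤ β → (∀ z, g z = α * n z + β * n' z) → False) :
    chordFun n n' y y' x < chordFun n n' y y' y := by
  obtain ⟨α, β, hab⟩ := exists_comb he he' h h' g
  have hneg : α < 0 ∨ β < 0 := by
    by_contra! hc
    exact hcone α β hc.1 hc.2 hab
  have := side_of_not_cone (s := n' y' - n' y) (t := n y - n y') (c := n y - n x)
    (d := n' y' - n' x) (α := α) (β := β) (by linarith) (by linarith) (by linarith) (by linarith)
    hneg (by rw [hab, hab] at hg; linarith) (by rw [hab y', hab x] at hg'; linarith)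
  rw [chordFun_apply, chordFun_apply]
  nlinarith

lemma shift_mem {p x : Pt} {C : Set Pt} (q : Pt) (h : x ∈ tr p C) : x + (q - p) ∈ tr q C := by
  rw [mem_tr] at *
  convert h using 1
  abel

lemma shift_mem_interior {p x : Pt} {C : Set Pt} (q : Pt) (h : x ∈ interior (tr p C)) :
    x + (q - p) ∈ interior (tr q C) := by
  have h2 : ∀ r : Pt, interior (tr r C) = tr r (interior C) := fun r =>
    ((Homeomorph.addLeft r).image_interior C).symm
  rw [h2] at *
  exact shift_mem q h

lemma isClosed_tr {C : Set Pt} (hC : IsConvexBody C) (p : Pt) : IsClosed (tr p C) :=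
  (hC.1.image (by fun_prop : Continuous (p + ·))).isClosed

lemma isBounded_tr {C : Set Pt} (hC : IsConvexBody C) (p : Pt) : Bornology.IsBounded (tr p C) :=
  (hC.1.image (by fun_prop : Continuous (p + ·))).isBounded

lemma convex_tr {C : Set Pt} (hC : IsConvexBody C) (p : Pt) : Convex ℝ (tr p C) :=
  hC.2.1.translate p

lemma interior_tr_nonempty {C : Set Pt} (hC : IsConvexBody C) (p : Pt) :
    (interior (tr p C)).Nonempty := by
  obtain ⟨x, hx⟩ := hC.2.2
  have : x ∈ interior (tr 0 C) := by
    have : tr 0 C = C := by ext; simp [mem_tr]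
    rwa [this]
  exact ⟨_, shift_mem_interior p this⟩

/-- If `n` supports `C_p` at a point of `C_q`, then `C_q` reaches at least as far in direction
`n`. -/
lemma support_le {C : Set Pt} {p q x : Pt} {n : Pt →L[ℝ] ℝ} (hn : ∀ z ∈ tr p C, n z ≤ n x)
    (hx : x ∈ tr q C) : 0 ≤ n (q - p) := by
  have := hn _ (shift_mem p hx)
  simp only [map_add, map_sub] at *
  linarith

/-- Strict form of `support_le`, at an interior point of `C_q`. -/
lemma support_lt {C : Set Pt} {p q x : Pt} {n : Pt →L[ℝ] ℝ}
    (hn : ∀ z ∈ interior (tr p C), n z < n x) (hx : x ∈ interior (tr q C)) : 0 < n (q - p) := by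
  have := hn _ (shift_mem_interior p hx)
  simp only [map_add, map_sub] at *
  linarith

/-- If `n` strictly separates a point of `C_p` from `C_q`, then `C_q` reaches less far than `C_p` in
direction `n`. -/
lemma separate_lt {C : Set Pt} {p q x : Pt} {n : Pt →L[ℝ] ℝ} (hn : ∀ z ∈ tr q C, n z < n x)
    (hx : x ∈ tr p C) : n (q - p) < 0 := by
  have := hn _ (shift_mem q hx)
  simp only [map_add, map_sub] at *
  linarith

/-- Noncollinearity makes `p₁ - p, p₂ - p` a basis, so a functional vanishing on both is zero. -/
lemma eq_zero_of_not_collinear {p p₁ p₂ : Pt} (hcol : ¬ Collinear ℝ ({p, p₁, p₂} : Set Pt))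
    {n : Pt →L[ℝ] ℝ} (h1 : n (p₁ - p) = 0) (h2 : n (p₂ - p) = 0) (x : Pt) : n x = 0 := by
  by_contra hx
  apply hcol
  obtain ⟨a, b, hn⟩ := exists_coord n
  have hab : a ^ 2 + b ^ 2 ≠ 0 := by
    intro h
    have ha : a = 0 := by nlinarith [sq_nonneg a, sq_nonneg b]
    have hb : b = 0 := by nlinarith [sq_nonneg a, sq_nonneg b]
    apply hx; rw [hn, ha, hb]; ring
  have key : ∀ q : Pt, n (q - p) = 0 → ∃ r : ℝ, q = r • (!₂[-b, a] : Pt) +ᵥ p := by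
    intro q hq
    rw [hn] at hq
    simp only [PiLp.sub_apply] at hq
    refine ⟨(a * (q 1 - p 1) - b * (q 0 - p 0)) / (a ^ 2 + b ^ 2), ?_⟩
    ext i
    fin_cases i
    · simp
      field_simp
      linear_combination a * hq
    · simp
      field_simp
      linear_combination b * hq
  rw [collinear_iff_of_mem (p₀ := p) (by simp)]
  refine ⟨!₂[-b, a], ?_⟩
  rintro q (rfl | rfl | rfl)
  · exact ⟨0, by simp⟩
  · exact key _ h1
  · exact key _ h2

/-! ### The boundary of the third translate inside the intersection -/

/-- Any two points of `∂C_p ∩ I` are joined by an arc of `∂C_p` inside `I`. -/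
lemma isPreconnected_frontier_translate {C : Set Pt} (hC : IsConvexBody C) {p₁ p₂ p : Pt}
    (hcol : ¬ Collinear ℝ ({p, p₁, p₂} : Set Pt)) :
    IsPreconnected (frontier (tr p C) ∩ (tr p₁ C ∩ tr p₂ C)) := by
  apply isPreconnected_of_forall_pair
  rintro y ⟨hyD, hyK⟩ y' ⟨hyD', hyK'⟩
  set D := tr p C with hD
  have hDcl : IsClosed D := isClosed_tr hC p
  have hDc : Convex ℝ D := convex_tr hC p
  have hKc : Convex ℝ (tr p₁ C ∩ tr p₂ C) := (convex_tr hC p₁).inter (convex_tr hC p₂)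
  have hyD1 : y ∈ D := hDcl.frontier_subset hyD
  have hyD1' : y' ∈ D := hDcl.frontier_subset hyD'
  by_cases hseg : ∀ m ∈ segment ℝ y y', m ∉ interior D
  · refine ⟨segment ℝ y y', fun m hm => ⟨?_, hKc.segment_subset hyK hyK' hm⟩,
      left_mem_segment .., right_mem_segment .., (convex_segment y y').isPreconnected⟩
    exact ⟨subset_closure (hDc.segment_subset hyD1 hyD1' hm), hseg m hm⟩
  push Not at hseg
  obtain ⟨m, hm, hmi⟩ := hseg
  have hDi : (interior D).Nonempty := ⟨m, hmi⟩
  -- both normals lie in the cone of functionals nonnegative on `p₁ - p` and `p₂ - p`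
  obtain ⟨n, hn, hns⟩ := exists_support_s17 hDc hDi hyD
  obtain ⟨n', hn', hns'⟩ := exists_support_s17 hDc hDi hyD'
  have hn1 : 0 ≤ n (p₁ - p) := support_le hn hyK.1
  have hn2 : 0 ≤ n (p₂ - p) := support_le hn hyK.2
  have hn1' : 0 ≤ n' (p₁ - p) := support_le hn' hyK'.1
  have hn2' : 0 ≤ n' (p₂ - p) := support_le hn' hyK'.2
  obtain ⟨a, b, ha, hb, hab, rfl⟩ := hm
  obtain rfl : a = 1 - b := by linarith
  have hm1 := hns _ hmi
  have hm1' := hns' _ hmi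
  simp only [map_add, map_smul, smul_eq_mul] at hm1 hm1'
  have ht : n y' < n y := by
    by_contra! h
    nlinarith
  have hs : n' y < n' y' := by
    by_contra! h
    nlinarith
  set e := (p₁ - p) + (p₂ - p) with he
  have hne : 0 < n e := by
    by_contra! h
    have h1 : n (p₁ - p) = 0 := by rw [he, map_add] at h; linarith
    have h2 : n (p₂ - p) = 0 := by rw [he, map_add] at h; linarith
    have := eq_zero_of_not_collinear hcol h1 h2
    rw [this, this] at ht
    exact lt_irrefl _ ht
  have hne' : 0 ≤ n' e := by rw [he, map_add]; linarith
  set φ := chordFun n n' y y' with hφ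
  have hφyy' : φ y' = φ y := by rw [hφ, chordFun_apply, chordFun_apply]; ring
  have hφm : φ ((1 - b) • y + b • y') = φ y := by
    simp only [map_add, map_smul, smul_eq_mul, hφyy']; ring
  have hφe : 0 < φ e := by
    rw [hφ, chordFun_apply]
    have := mul_pos (sub_pos.2 hs) hne
    have := mul_nonneg (sub_pos.2 ht).le hne'
    linarith
  -- the part of `C_p` cut off by the chord on the apex side lies in `I`
  have hcap : ∀ q : Pt, 0 ≤ n (q - p) → 0 ≤ n' (q - p) → y ∈ tr q C → y' ∈ tr q C →
      ∀ x ∈ D, φ y ≤ φ x → x ∈ tr q C := by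
    intro q hnq hnq' hyq hyq' x hxD hφx
    by_contra hxq
    obtain ⟨g, u, hgu, hux⟩ :=
      geometric_hahn_banach_closed_point (convex_tr hC q) (isClosed_tr hC q) hxq
    have hg : ∀ z ∈ tr q C, g z < g x := fun z hz => (hgu z hz).trans hux
    have hgq : g (q - p) < 0 := separate_lt hg hxD
    have := chordFun_lt hne hne' ht hs (hn x hxD) (hn' x hxD) (hg y hyq) (hg y' hyq') (by
      intro α β hα hβ hab
      rw [hab] at hgq
      nlinarith [mul_nonneg hα hnq, mul_nonneg hβ hnq'])
    rw [← hφ] at this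
    linarith
  obtain ⟨S, hS, hyS, hyS', hSc⟩ := exists_arc hDc (isBounded_tr hC p) hmi hyD hyD' φ hφm.symm
    (hφyy'.trans hφm.symm) (w := (1 - b) • y + b • y' + e) (by rw [map_add φ _ e]; linarith)
  refine ⟨S, fun x hx => ?_, hyS, hyS', hSc⟩
  obtain ⟨hx1, hx2⟩ := hS hx
  have hx3 : φ y ≤ φ x := hφm ▸ hx2
  have hxD := hDcl.frontier_subset hx1
  exact ⟨hx1, hcap p₁ hn1 hn1' hyK.1 hyK'.1 x hxD hx3, hcap p₂ hn2 hn2' hyK.2 hyK'.2 x hxD hx3⟩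

/-! ### The boundary of the intersection inside the third translate -/

/-- Boundary points of `I` lying in `C_p` are supported by a functional which supports one of the
two translates, hence is nonpositive on `p₁ - p` or on `p₂ - p`. -/
lemma exists_support_inter {C : Set Pt} (hC : IsConvexBody C) {p₁ p₂ p x : Pt}
    (hx : x ∈ frontier (tr p₁ C ∩ tr p₂ C)) (hxD : x ∈ tr p C) :
    ∃ g : Pt →L[ℝ] ℝ, (∀ z ∈ tr p₁ C ∩ tr p₂ C, g z ≤ g x) ∧
      (∀ z ∈ interior (tr p₁ C ∩ tr p₂ C), g z < g x) ∧ (g (p₁ - p) ≤ 0 ∨ g (p₂ - p) ≤ 0) := by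
  have hneg : ∀ (g : Pt →L[ℝ] ℝ) (q : Pt), 0 ≤ g (p - q) → g (q - p) ≤ 0 := by
    intro g q h
    rw [map_sub] at *
    linarith
  rcases frontier_inter_subset _ _ hx with h | h
  · obtain ⟨g, h1, h2⟩ := exists_support_s17 (convex_tr hC p₁) (interior_tr_nonempty hC p₁) h.1
    exact ⟨g, fun z hz => h1 z hz.1, fun z hz => h2 z (interior_mono Set.inter_subset_left hz),
      Or.inl (hneg _ _ (support_le h1 hxD))⟩
  · obtain ⟨g, h1, h2⟩ := exists_support_s17 (convex_tr hC p₂) (interior_tr_nonempty hC p₂) h.2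
    exact ⟨g, fun z hz => h1 z hz.2, fun z hz => h2 z (interior_mono Set.inter_subset_right hz),
      Or.inr (hneg _ _ (support_le h1 hxD))⟩

/-- `f` is a nonzero functional whose level set through `x₁` is the line `x₁ x₃`. The field `indep`
says that a linear functional with equal values at `x₁`, `x₃` and a point off that line vanishes. -/
structure IsLineFun (f : Pt →L[ℝ] ℝ) (x₁ x₃ : Pt) : Prop where
  nonzero : ∃ w, f w ≠ 0
  eq : f x₃ = f x₁
  param : ∀ z, f z = f x₁ → ∃ r : ℝ, z = x₁ + r • (x₃ - x₁)
  indep : ∀ (n : Pt →L[ℝ] ℝ) (w : Pt), f w ≠ f x₁ → n x₃ = n x₁ → n w = n x₁ → ∀ v, n v = 0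

lemma exists_isLineFun {x₁ x₃ : Pt} (h : x₁ ≠ x₃) : ∃ f, IsLineFun f x₁ x₃ := by
  have hv : (x₃ 0 - x₁ 0) ^ 2 + (x₃ 1 - x₁ 1) ^ 2 ≠ 0 := by
    intro h0
    apply h
    have h1 : x₃ 0 - x₁ 0 = 0 := by nlinarith [sq_nonneg (x₃ 0 - x₁ 0), sq_nonneg (x₃ 1 - x₁ 1)]
    have h2 : x₃ 1 - x₁ 1 = 0 := by nlinarith [sq_nonneg (x₃ 0 - x₁ 0), sq_nonneg (x₃ 1 - x₁ 1)]
    ext i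
    fin_cases i
    · simp; linarith
    · simp; linarith
  let f : Pt →L[ℝ] ℝ := (x₃ 1 - x₁ 1) • EuclideanSpace.proj 0 - (x₃ 0 - x₁ 0) • EuclideanSpace.proj 1
  have hf : ∀ z, f z = (x₃ 1 - x₁ 1) * z 0 - (x₃ 0 - x₁ 0) * z 1 := fun z => by simp [f]
  refine ⟨f, ⟨!₂[x₃ 1 - x₁ 1, -(x₃ 0 - x₁ 0)], fun h0 => hv ?_⟩, by rw [hf, hf]; ring, ?_, ?_⟩
  · rw [hf] at h0
    simp at h0
    linear_combination h0
  · intro z hz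
    rw [hf, hf] at hz
    refine ⟨((z 0 - x₁ 0) * (x₃ 0 - x₁ 0) + (z 1 - x₁ 1) * (x₃ 1 - x₁ 1)) /
      ((x₃ 0 - x₁ 0) ^ 2 + (x₃ 1 - x₁ 1) ^ 2), ?_⟩
    ext i
    fin_cases i
    · simp
      field_simp
      linear_combination (x₃ 1 - x₁ 1) * hz
    · simp
      field_simp
      linear_combination -(x₃ 0 - x₁ 0) * hz
  · intro n w hw h1 h2 v
    obtain ⟨a, b, hn⟩ := exists_coord n
    rw [hn, hn] at h1 h2
    have hd : f w - f x₁ ≠ 0 := sub_ne_zero.2 hw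
    rw [hf, hf] at hd
    have ha : a = 0 := by
      apply (mul_eq_zero.1 (_ : (_ : ℝ) * a = 0)).resolve_left hd
      linear_combination (x₃ 1 - x₁ 1) * h2 - (w 1 - x₁ 1) * h1
    have hb : b = 0 := by
      apply (mul_eq_zero.1 (_ : (_ : ℝ) * b = 0)).resolve_left hd
      linear_combination (w 0 - x₁ 0) * h1 - (x₃ 0 - x₁ 0) * h2
    rw [hn, ha, hb]; ring

lemma IsLineFun.neg {f : Pt →L[ℝ] ℝ} {x₁ x₃ : Pt} (h : IsLineFun f x₁ x₃) :
    IsLineFun (-f) x₁ x₃ where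
  nonzero := h.nonzero.imp fun w hw => by simpa using hw
  eq := by simp [h.eq]
  param z hz := h.param z (by simpa using hz)
  indep n w hw := h.indep n w (by simpa using hw)

/-- Four points cannot alternate as follows: `y, y'` lie on different sides of the line `x₁ x₃`,
each of the four points maximizes its functional (`n`, `n'`, `g₁`, `g₃` at `y`, `y'`, `x₁`, `x₃`) over
all four, `n` and `n'` lie in the convex cone of functionals positive on `e₁` and `e₂`, and `g₁`, `g₃`
lie outside that cone. If `x₁`, say, were on the apex side of the chord `y y'`, then `g₁` would be a
nonnegative combination of `n` and `n'`; so both `x₁` and `x₃` are strictly on the other side, while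
the segment `x₁ x₃` meets the chord. -/
lemma no_alternation {I : Set Pt} (hI : Convex ℝ I) {x₁ x₃ y y' e₁ e₂ : Pt}
    {g₁ g₃ n n' f : Pt →L[ℝ] ℝ} (hf : IsLineFun f x₁ x₃)
    (hy : y ∈ I) (hy' : y' ∈ I) (hfy : f x₁ ≤ f y) (hfy' : f y' < f x₁)
    (hg₁ : ∀ z ∈ I, g₁ z < g₁ x₁) (hg₁' : g₁ x₃ ≤ g₁ x₁) (hg₁e : g₁ e₁ ≤ 0 ∨ g₁ e₂ ≤ 0)
    (hg₃ : ∀ z ∈ I, g₃ z < g₃ x₃) (hg₃' : g₃ x₁ ≤ g₃ x₃) (hg₃e : g₃ e₁ ≤ 0 ∨ g₃ e₂ ≤ 0)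
    (hn₁ : n x₁ ≤ n y) (hn₃ : n x₃ ≤ n y) (hny : n y' ≤ n y)
    (hne₁ : 0 < n e₁) (hne₂ : 0 < n e₂)
    (hn₁' : n' x₁ ≤ n' y') (hn₃' : n' x₃ ≤ n' y') (hny' : n' y ≤ n' y')
    (hne₁' : 0 < n' e₁) (hne₂' : 0 < n' e₂) : False := by
  -- `z` is the point where the segment `y y'` crosses the line `x₁ x₃`
  have hfd : 0 < f y - f y' := by linarith
  obtain ⟨b, hb0, hb1, hfz⟩ : ∃ b : ℝ, 0 ≤ b ∧ b ≤ 1 ∧ f ((1 - b) • y + b • y') = f x₁ := by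
    refine ⟨(f y - f x₁) / (f y - f y'), div_nonneg (by linarith) hfd.le,
      (div_le_one hfd).2 (by linarith), ?_⟩
    simp only [map_add, map_smul, smul_eq_mul]
    field_simp
    ring
  obtain ⟨r, hr⟩ := hf.param _ hfz
  have hzI : x₁ + r • (x₃ - x₁) ∈ I := by
    rw [← hr]
    exact hI hy hy' (by linarith) hb0 (by ring)
  have hr0 : 0 < r := by
    have := hg₁ _ hzI
    simp only [map_add, map_smul, map_sub, smul_eq_mul] at this
    by_contra! h
    nlinarith
  have hr1 : r < 1 := by
    have := hg₃ _ hzI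
    simp only [map_add, map_smul, map_sub, smul_eq_mul] at this
    by_contra! h
    nlinarith
  have hval : ∀ k : Pt →L[ℝ] ℝ, (1 - b) * k y + b * k y' = (1 - r) * k x₁ + r * k x₃ := by
    intro k
    have := congrArg k hr
    simp only [map_add, map_smul, map_sub, smul_eq_mul] at this
    linarith
  -- a functional maximal over `y, y', x₁, x₃` at both `y` and `y'` is equal at all four points,
  -- hence zero, since `y'` is off the line `x₁ x₃`
  have hstrict : ∀ k : Pt →L[ℝ] ℝ, 0 < k e₁ → k y = k y' → k x₁ ≤ k y → k x₃ ≤ k y → False := by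
    intro k hk h h1 h3
    have hv := hval k
    have h1' : k x₁ = k y := by
      by_contra hne
      have := lt_of_le_of_ne h1 hne
      nlinarith
    have h3' : k x₃ = k y := by
      by_contra hne
      have := lt_of_le_of_ne h3 hne
      nlinarith
    have := hf.indep k y' hfy'.ne (by rw [h1', h3']) (by rw [h1', h]) e₁
    linarith
  have ht : n y' < n y :=
    lt_of_le_of_ne hny fun h => hstrict n hne₁ h.symm hn₁ hn₃
  have hs : n' y < n' y' :=
    lt_of_le_of_ne hny' fun h => hstrict n' hne₁' h (by linarith) (by linarith)
  have hcone : ∀ (g : Pt →L[ℝ] ℝ) (x : Pt), g y < g x → (g e₁ ≤ 0 ∨ g e₂ ≤ 0) →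
      ∀ α β : ℝ, 0 ≤ α → 0 ≤ β → (∀ z, g z = α * n z + β * n' z) → False := by
    intro g x hlt he α β hα hβ hab
    have h0 : α = 0 ∧ β = 0 := by
      rcases he with he | he
      · rw [hab] at he
        constructor
        · by_contra h
          have := mul_pos (lt_of_le_of_ne hα (Ne.symm h)) hne₁
          have := mul_nonneg hβ hne₁'.le
          linarith
        · by_contra h
          have := mul_pos (lt_of_le_of_ne hβ (Ne.symm h)) hne₁'
          have := mul_nonneg hα hne₁.le
          linarith
      · rw [hab] at he
        constructor
        · by_contra h
          have := mul_pos (lt_of_le_of_ne hα (Ne.symm h)) hne₂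
          have := mul_nonneg hβ hne₂'.le
          linarith
        · by_contra h
          have := mul_pos (lt_of_le_of_ne hβ (Ne.symm h)) hne₂'
          have := mul_nonneg hα hne₂.le
          linarith
    rw [hab, hab, h0.1, h0.2] at hlt
    linarith
  have k1 := chordFun_lt hne₁ hne₁'.le ht hs hn₁ hn₁' (hg₁ y hy) (hg₁ y' hy')
    (hcone g₁ x₁ (hg₁ y hy) hg₁e)
  have k3 := chordFun_lt hne₁ hne₁'.le ht hs hn₃ hn₃' (hg₃ y hy) (hg₃ y' hy')
    (hcone g₃ x₃ (hg₃ y hy) hg₃e)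
  have kv := hval (chordFun n n' y y')
  have ky : chordFun n n' y y' y' = chordFun n n' y y' y := by
    rw [chordFun_apply, chordFun_apply]; ring
  rw [ky] at kv
  nlinarith

/-- A convex set `K` is the closure of its interior within a half-plane cutting through that
interior, so it suffices to check containment in a closed `D` on the open part. -/
lemma halfplane_subset {K D : Set Pt} (hK : Convex ℝ K) (hD : IsClosed D) {m : Pt}
    (hm : m ∈ interior K) {f : Pt →L[ℝ] ℝ} {w : Pt} (hw : f m < f w)
    (h : ∀ x ∈ interior K, f m < f x → x ∈ D) : ∀ x ∈ K, f m ≤ f x → x ∈ D := by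
  obtain ⟨k, hk, hfk⟩ : ∃ k ∈ interior K, f m < f k := by
    have hc : Continuous fun t : ℝ => m + t • (w - m) := by fun_prop
    have h0 : ∀ᶠ t : ℝ in nhdsWithin 0 (Set.Ioi 0), m + t • (w - m) ∈ interior K := by
      apply nhdsWithin_le_nhds
      exact hc.continuousAt.eventually_mem (by simpa using isOpen_interior.mem_nhds hm)
    obtain ⟨t, ht, ht0⟩ := (h0.and self_mem_nhdsWithin).exists
    refine ⟨_, ht, ?_⟩
    simp only [map_add, map_smul, map_sub, smul_eq_mul]
    have : 0 < t * (f w - f m) := mul_pos ht0 (by linarith)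
    linarith
  intro x hx hfx
  have hsub : openSegment ℝ k x ⊆ D := by
    intro z hz
    refine h z (hK.openSegment_interior_self_subset_interior hk hx hz) ?_
    obtain ⟨a, b, ha, hb, hab, rfl⟩ := hz
    obtain rfl : b = 1 - a := by linarith
    simp only [map_add, map_smul, smul_eq_mul]
    nlinarith
  exact closure_minimal hsub hD (segment_subset_closure_openSegment (right_mem_segment ..))

/-- Any two points of `∂I ∩ C_p` are joined by an arc of `∂I` inside `C_p`. -/
lemma isPreconnected_frontier_inter_s17 {C : Set Pt} (hC : IsConvexBody C) {p₁ p₂ p : Pt} :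
    IsPreconnected (frontier (tr p₁ C ∩ tr p₂ C) ∩ tr p C) := by
  apply isPreconnected_of_forall_pair
  rintro x₁ ⟨hx₁, hxD₁⟩ x₃ ⟨hx₃, hxD₃⟩
  obtain ⟨g₁, hg₁, hgs₁, hge₁⟩ := exists_support_inter hC hx₁ hxD₁
  obtain ⟨g₃, hg₃, hgs₃, hge₃⟩ := exists_support_inter hC hx₃ hxD₃
  set K := tr p₁ C ∩ tr p₂ C with hK
  set D := tr p C with hD
  have hDcl : IsClosed D := isClosed_tr hC p
  have hDc : Convex ℝ D := convex_tr hC p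
  have hKcl : IsClosed K := (isClosed_tr hC p₁).inter (isClosed_tr hC p₂)
  have hKc : Convex ℝ K := (convex_tr hC p₁).inter (convex_tr hC p₂)
  have hKb : Bornology.IsBounded K := (isBounded_tr hC p₁).subset Set.inter_subset_left
  have hxK₁ := hKcl.frontier_subset hx₁
  have hxK₃ := hKcl.frontier_subset hx₃
  by_cases hseg : ∀ m ∈ segment ℝ x₁ x₃, m ∉ interior K
  · exact ⟨segment ℝ x₁ x₃, fun m hm => ⟨⟨subset_closure (hKc.segment_subset hxK₁ hxK₃ hm),
      hseg m hm⟩, hDc.segment_subset hxD₁ hxD₃ hm⟩,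
      left_mem_segment .., right_mem_segment .., (convex_segment x₁ x₃).isPreconnected⟩
  push Not at hseg
  obtain ⟨m, hm, hmi⟩ := hseg
  have hmD : m ∈ D := hDc.segment_subset hxD₁ hxD₃ hm
  have hne : x₁ ≠ x₃ := by
    rintro rfl
    rw [segment_same] at hm
    exact hx₁.2 (hm ▸ hmi)
  obtain ⟨f₀, hf₀⟩ := exists_isLineFun hne
  have hfm : ∀ f, IsLineFun f x₁ x₃ → f m = f x₁ := by
    intro f hf
    obtain ⟨a, b, ha, hb, hab, rfl⟩ := hm
    simp only [map_add, map_smul, smul_eq_mul, hf.eq]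
    rw [← add_mul, hab, one_mul]
  -- it suffices that one of the two caps cut off by the chord `x₁ x₃` lies in `D`
  have harc : ∀ f w, IsLineFun f x₁ x₃ → f m < f w → (∀ x ∈ interior K, f m < f x → x ∈ D) →
      ∃ S ⊆ frontier K ∩ D, x₁ ∈ S ∧ x₃ ∈ S ∧ IsPreconnected S := by
    intro f w hf hw h
    obtain ⟨S, hS, h1, h3, hSc⟩ := exists_arc hKc hKb hmi hx₁ hx₃ f (hfm f hf).symm
      (hf.eq.trans (hfm f hf).symm) hw
    exact ⟨S, fun x hx => ⟨(hS hx).1, halfplane_subset hKc hDcl hmi hw h x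
      (hKcl.frontier_subset (hS hx).1) (hS hx).2⟩, h1, h3, hSc⟩
  -- a point of `int I ∩ int C_p` off the line `x₁ x₃`
  obtain ⟨q, hqK, hqD, hqf⟩ : ∃ q ∈ interior K, q ∈ D ∧ f₀ q ≠ f₀ m := by
    have hDi : (interior D).Nonempty := interior_tr_nonempty hC p
    have hmcl : m ∈ closure (interior D) := by
      rw [hDc.closure_interior_eq_closure_of_nonempty_interior hDi]
      exact subset_closure hmD
    have hU : IsOpen (interior K ∩ interior D) := isOpen_interior.inter isOpen_interior
    obtain ⟨q, hqK, hqD⟩ := mem_closure_iff.1 hmcl _ isOpen_interior hmi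
    by_cases hq : f₀ q = f₀ m
    swap
    · exact ⟨q, hqK, interior_subset hqD, hq⟩
    obtain ⟨w, hw⟩ := hf₀.nonzero
    have hc : Continuous fun t : ℝ => q + t • w := by fun_prop
    have h0 : ∀ᶠ t : ℝ in nhdsWithin 0 (Set.Ioi 0), q + t • w ∈ interior K ∩ interior D := by
      apply nhdsWithin_le_nhds
      exact hc.continuousAt.eventually_mem (by simpa using hU.mem_nhds ⟨hqK, hqD⟩)
    obtain ⟨t, ht, ht0⟩ := (h0.and self_mem_nhdsWithin).exists
    refine ⟨_, ht.1, interior_subset ht.2, ?_⟩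
    have : t * f₀ w ≠ 0 := mul_ne_zero (ne_of_gt ht0) hw
    simpa [hq] using this
  obtain ⟨f, hf, hq⟩ : ∃ f, IsLineFun f x₁ x₃ ∧ f q < f m := by
    rcases lt_or_gt_of_ne hqf with h | h
    · exact ⟨f₀, hf₀, h⟩
    · exact ⟨-f₀, hf₀.neg, by simpa using h⟩
  by_cases hlow : ∀ x ∈ interior K, (-f) m < (-f) x → x ∈ D
  · exact harc (-f) q hf.neg (by simpa using hq) hlow
  by_cases hup : ∀ x ∈ interior K, f m < f x → x ∈ D
  · exact harc f (m + (m - q)) hf (by simp only [map_add, map_sub]; linarith) hup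
  exfalso
  push Not at hlow hup
  obtain ⟨x', hx'K, hx'f, hx'D⟩ := hlow
  obtain ⟨x, hxK, hxf, hxD⟩ := hup
  have hx'f : f x' < f m := by simpa using hx'f
  obtain ⟨y, hy, hyD⟩ := exists_mem_segment_frontier hmD hxD
  obtain ⟨y', hy', hyD'⟩ := exists_mem_segment_frontier hqD hx'D
  have hyK : y ∈ interior K := hKc.interior.segment_subset hmi hxK hy
  have hzK : y' ∈ interior K := hKc.interior.segment_subset hqK hx'K hy'
  have hfy : f m ≤ f y := by
    obtain ⟨a, b, ha, hb, hab, rfl⟩ := hy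
    obtain rfl : a = 1 - b := by linarith
    simp only [map_add, map_smul, smul_eq_mul]
    nlinarith
  have hfy' : f y' < f m := by
    have hconv : Convex ℝ {z | f z < f m} := convex_halfSpace_lt f.isLinear (f m)
    exact hconv.segment_subset hq hx'f hy'
  have hDi : (interior D).Nonempty := interior_tr_nonempty hC p
  obtain ⟨n, hn, hns⟩ := exists_support_s17 hDc hDi hyD
  obtain ⟨n', hn', hns'⟩ := exists_support_s17 hDc hDi hyD'
  have hi₁ : interior K ⊆ interior (tr p₁ C) := interior_mono Set.inter_subset_left
  have hi₂ : interior K ⊆ interior (tr p₂ C) := interior_mono Set.inter_subset_right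
  have hyD1 := hDcl.frontier_subset hyD
  have hyD1' := hDcl.frontier_subset hyD'
  exact no_alternation hKc.interior hf hyK hzK (by rw [← hfm f hf]; exact hfy)
    (by rw [← hfm f hf]; exact hfy') hgs₁ (hg₁ _ hxK₃) hge₁ hgs₃ (hg₃ _ hxK₁) hge₃
    (hn _ hxD₁) (hn _ hxD₃) (hn _ hyD1') (support_lt hns (hi₁ hyK)) (support_lt hns (hi₂ hyK))
    (hn' _ hxD₁) (hn' _ hxD₃) (hn' _ hyD1) (support_lt hns' (hi₁ hzK))
    (support_lt hns' (hi₂ hzK))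

/-- Let `C` be a convex body and `p₁, p₂` points such that
`I = C_{p₁} ∩ C_{p₂}` has nonempty interior.  For any `p` such that `p, p₁, p₂` are not
collinear, if `I ∩ C_p ≠ ∅` then `I` and `C_p` intersect plainly. -/
theorem stmt17 (C : Set Pt) (hC : IsConvexBody C) (p₁ p₂ : Pt)
    (hI : (interior (tr p₁ C ∩ tr p₂ C)).Nonempty)
    (p : Pt) (hcol : ¬ Collinear ℝ ({p, p₁, p₂} : Set Pt))
    (hmeet : ((tr p₁ C ∩ tr p₂ C) ∩ tr p C).Nonempty) :
    PlainlyIntersect (tr p₁ C ∩ tr p₂ C) (tr p C) := by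
  exact ⟨isPreconnected_frontier_inter_s17 hC, isPreconnected_frontier_translate hC hcol⟩
end
end
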